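/- arXiv:1304.0562 — 2 statements merged into one kernel-verified Lean document; each statement's English description precedes it below -/
import Mathlib

section
/- There exists a universal constant C such that for all x, y ∈ [0,1] and every measurable set S ⊆ (0,∞) of finite Lebesgue measure λ(S): |J(x,y,S) − 2·λ(S)·sin(πx)·sin(πy)| ≤ C·min( min(x,y)·(1 − max(x,y)) , E_{inf S}·sin(πx)·sin(πy) ), where min(·, +∞) discards the second term when inf S = 0. -/
open Real MeasureTheory Set Filter

/-- Transition density of Brownian motion killed upon exiting `(0,a)`. -/
noncomputable def pker (a t x y : ℝ) : ℝ :=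
  (2/a) * ∑' n : ℕ, Real.exp (-(π^2) * ((n : ℝ) + 1)^2 * t / (2 * a^2)) *
    Real.sin (π * ((n : ℝ) + 1) * x / a) * Real.sin (π * ((n : ℝ) + 1) * y / a)

/-- `J(x,y,S) = ∫_S e^{π²s/2}·p¹_s(x,y) ds`. -/
noncomputable def Jfun (x y : ℝ) (S : Set ℝ) : ℝ :=
  ∫ s in S, Real.exp (π^2 * s / 2) * pker 1 s x y

/-- `E_t = π²·∑_{n≥2} n²·exp(−π²(n²−1)t/2)` (for `t > 0`; `E_0 = +∞`). -/
noncomputable def Efun (t : ℝ) : ℝ :=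
  π^2 * ∑' n : ℕ, ((n : ℝ) + 2)^2 * Real.exp (-(π^2) * (((n : ℝ) + 2)^2 - 1) * t / 2)


lemma aux_cos_sum (N : ℕ) (hN : 0 < N) (l : ℤ) (h : Real.sin (π * l / N / 2) ≠ 0) :
    ∑ n ∈ Finset.range N, Real.cos (n * (π * l / N)) = (1 - (-1 : ℝ) ^ l) / 2 := by
  have key : ∀ M : ℕ, 2 * Real.sin (π * l / N / 2) * ∑ n ∈ Finset.range M, Real.cos (n * (π * l / N))
      = Real.sin (M * (π * l / N) - π * l / N / 2) + Real.sin (π * l / N / 2) := by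
    intro M
    induction M with
    | zero => simp
    | succ M ih =>
      rw [Finset.sum_range_succ, mul_add, ih]
      generalize π * l / N = a
      push_cast
      have e1 : ((M:ℝ) + 1) * a - a / 2 = M * a + a / 2 := by ring
      rw [e1, Real.sin_add, Real.sin_sub]
      ring
  have h1 := key N
  have hN' : (N : ℝ) ≠ 0 := by positivity
  have e2 : (N:ℝ) * (π * l / N) - π * l / N / 2 = -(π * l / N / 2 - l * π) := by field_simp; ring
  rw [e2, Real.sin_neg, Real.sin_sub_int_mul_pi] at h1
  apply mul_left_cancel₀ (mul_ne_zero two_ne_zero h)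
  rw [h1]; ring

lemma aux_base (M j k : ℕ) (hj : j ≤ M + 1) (hk : k ≤ M + 1) :
    0 ≤ ∑ n ∈ Finset.range M, Real.sin (π * ((n:ℝ) + 1) * j / ((M:ℝ)+1)) *
      Real.sin (π * ((n:ℝ) + 1) * k / ((M:ℝ)+1)) := by
  by_cases hjk : j = k
  · subst hjk
    exact Finset.sum_nonneg fun n _ => mul_self_nonneg _
  have hM : ((M:ℝ)+1) ≠ 0 := by positivity
  rcases Nat.eq_zero_or_pos j with h0 | hj0
  · subst h0; simp
  rcases Nat.eq_zero_or_pos k with h0 | hk0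
  · subst h0; simp
  have hs : ∑ n ∈ Finset.range M, Real.sin (π * ((n:ℝ) + 1) * j / ((M:ℝ)+1)) *
      Real.sin (π * ((n:ℝ) + 1) * k / ((M:ℝ)+1)) = 
      (∑ n ∈ Finset.range (M+1), Real.cos (n * (π * ((j:ℤ) - (k:ℤ) : ℤ) / ((M+1 : ℕ):ℝ))) -
      ∑ n ∈ Finset.range (M+1), Real.cos (n * (π * ((j:ℤ) + (k:ℤ) : ℤ) / ((M+1:ℕ):ℝ)))) / 2 := by
    rw [← Finset.sum_sub_distrib, Finset.sum_range_succ']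
    simp only [Nat.cast_zero, zero_mul, sub_self, add_zero]
    rw [Finset.sum_div]
    refine Finset.sum_congr rfl fun n _ => ?_
    push_cast
    have e1 : ((n:ℝ)+1) * (π * ((j:ℝ) - k) / ((M:ℝ)+1)) =
      π * ((n:ℝ) + 1) * j / ((M:ℝ)+1) - π * ((n:ℝ) + 1) * k / ((M:ℝ)+1) := by ring
    have e2 : ((n:ℝ)+1) * (π * ((j:ℝ) + k) / ((M:ℝ)+1)) =
      π * ((n:ℝ) + 1) * j / ((M:ℝ)+1) + π * ((n:ℝ) + 1) * k / ((M:ℝ)+1) := by ring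
    rw [e1, e2, Real.cos_sub, Real.cos_add]; ring
  have hne : ∀ l : ℤ, l ≠ 0 → -(2 * (M+1) : ℤ) < l → l < 2 * (M+1) →
      Real.sin (π * l / ((M+1:ℕ):ℝ) / 2) ≠ 0 := by
    intro l hl0 hl1 hl2 hsin
    rw [Real.sin_eq_zero_iff] at hsin
    obtain ⟨q, hq⟩ := hsin
    push_cast at hq
    have h2 : (q:ℝ) * (2 * (M+1)) = l := by
      have := Real.pi_ne_zero
      field_simp at hq
      linarith
    have h3 : q * (2 * (M+1)) = l := by exact_mod_cast h2
    rcases lt_trichotomy q 0 with h | h | h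
    · nlinarith
    · subst h; simp at h3; exact hl0 h3.symm
    · nlinarith
  rw [hs, aux_cos_sum _ (by omega) _ (hne _ (by omega) (by omega) (by omega)),
    aux_cos_sum _ (by omega) _ (hne _ (by omega) (by omega) (by omega))]
  have : ((-1:ℝ)) ^ ((j:ℤ) + k) = (-1) ^ ((j:ℤ) - k) := by
    have : (j:ℤ) + k = (j - k) + 2 * k := by ring
    rw [this, zpow_add₀ (by norm_num), zpow_mul]; simp
  rw [this]; simp

lemma aux_walk (M : ℕ) (m : ℕ) : ∀ (j k : ℕ) (_ : j ≤ M + 1) (_ : k ≤ M + 1),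
    0 ≤ ∑ n ∈ Finset.range M, Real.cos (π * ((n:ℝ)+1) / ((M:ℝ)+1)) ^ m *
      (Real.sin (π * ((n:ℝ) + 1) * j / ((M:ℝ)+1)) *
      Real.sin (π * ((n:ℝ) + 1) * k / ((M:ℝ)+1))) := by
  have hM : ((M:ℝ)+1) ≠ 0 := by positivity
  induction m with
  | zero => intro j k hj hk; simpa using aux_base M j k hj hk
  | succ m ih =>
    intro j k hj hk
    rcases Nat.eq_zero_or_pos j with h0 | hj0
    · subst h0; simp
    rcases Nat.eq_or_lt_of_le hj with h0 | hj1
    · subst h0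
      apply le_of_eq; symm
      apply Finset.sum_eq_zero
      intro n _
      have : π * ((n:ℝ) + 1) * ((M+1:ℕ):ℝ) / ((M:ℝ)+1) = ((n+1:ℕ):ℝ) * π := by
        push_cast; field_simp
      rw [this, Real.sin_nat_mul_pi]; simp
    obtain ⟨i, rfl⟩ : ∃ i, j = i + 1 := ⟨j - 1, by omega⟩
    have h1 := ih i k (by omega) hk
    have h2 := ih (i+2) k (by omega) hk
    have h3 := add_nonneg h1 h2
    rw [← Finset.sum_add_distrib] at h3
    have h4 := mul_nonneg (by norm_num : (0:ℝ) ≤ 1/2) h3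
    rw [Finset.mul_sum] at h4
    refine h4.trans_eq (Finset.sum_congr rfl fun n _ => ?_)
    have e1 : π * ((n:ℝ) + 1) * i / ((M:ℝ)+1) =
      π * ((n:ℝ) + 1) * ((i+1:ℕ):ℝ) / ((M:ℝ)+1) - π * ((n:ℝ)+1) / ((M:ℝ)+1) := by
        push_cast; ring
    have e2 : π * ((n:ℝ) + 1) * ((i+2:ℕ):ℝ) / ((M:ℝ)+1) =
      π * ((n:ℝ) + 1) * ((i+1:ℕ):ℝ) / ((M:ℝ)+1) + π * ((n:ℝ)+1) / ((M:ℝ)+1) := by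
        push_cast; ring
    rw [e1, e2, Real.sin_sub, Real.sin_add]
    ring

lemma aux_exp (M : ℕ) (c : ℝ) (hc : 0 ≤ c) (j k : ℕ) (hj : j ≤ M + 1) (hk : k ≤ M + 1) :
    0 ≤ ∑ n ∈ Finset.range M, Real.exp (c * (Real.cos (π * ((n:ℝ)+1) / ((M:ℝ)+1)) - 1)) *
      (Real.sin (π * ((n:ℝ) + 1) * j / ((M:ℝ)+1)) *
      Real.sin (π * ((n:ℝ) + 1) * k / ((M:ℝ)+1))) := by
  have hs : HasSum (fun m : ℕ => Real.exp (-c) * (c ^ m / m.factorial *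
      ∑ n ∈ Finset.range M, Real.cos (π * ((n:ℝ)+1) / ((M:ℝ)+1)) ^ m *
      (Real.sin (π * ((n:ℝ) + 1) * j / ((M:ℝ)+1)) *
      Real.sin (π * ((n:ℝ) + 1) * k / ((M:ℝ)+1)))))
      (∑ n ∈ Finset.range M, Real.exp (c * (Real.cos (π * ((n:ℝ)+1) / ((M:ℝ)+1)) - 1)) *
      (Real.sin (π * ((n:ℝ) + 1) * j / ((M:ℝ)+1)) *
      Real.sin (π * ((n:ℝ) + 1) * k / ((M:ℝ)+1)))) := by
    simp only [Finset.mul_sum]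
    apply hasSum_sum
    intro n _
    have h1 : HasSum (fun m : ℕ => (c * Real.cos (π * ((n:ℝ)+1) / ((M:ℝ)+1))) ^ m / m.factorial)
        (Real.exp (c * Real.cos (π * ((n:ℝ)+1) / ((M:ℝ)+1)))) := by
      rw [Real.exp_eq_exp_ℝ]
      exact NormedSpace.expSeries_div_hasSum_exp (𝔸 := ℝ) _
    have h2 := (h1.mul_left (Real.exp (-c))).mul_right ((Real.sin (π * ((n:ℝ) + 1) * j / ((M:ℝ)+1)) *
      Real.sin (π * ((n:ℝ) + 1) * k / ((M:ℝ)+1))))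
    rw [← Real.exp_add] at h2
    rw [show -c + c * Real.cos (π * ((n:ℝ)+1) / ((M:ℝ)+1)) =
      c * (Real.cos (π * ((n:ℝ)+1) / ((M:ℝ)+1)) - 1) by ring] at h2
    convert! h2 using 2 with m
    rw [mul_pow]; ring
  exact hs.nonneg fun m => mul_nonneg (Real.exp_pos _).le
    (mul_nonneg (by positivity) (aux_walk M m j k hj hk))

lemma aux_summable {s : ℝ} (hs : 0 < s) : Summable fun n : ℕ => Real.exp (-2 * s * ((n:ℝ)+1)^2) := by
  have h : Summable fun n : ℕ => (Real.exp (-2*s)) ^ n :=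
    summable_geometric_of_lt_one (Real.exp_pos _).le (by rw [Real.exp_lt_one_iff]; linarith)
  refine Summable.of_nonneg_of_le (fun _ => (Real.exp_pos _).le) (fun n => ?_) h
  rw [← Real.exp_nat_mul]
  apply Real.exp_le_exp.2
  have : (n:ℝ) ≤ ((n:ℝ)+1)^2 := by nlinarith [Nat.cast_nonneg (α := ℝ) n]
  nlinarith

lemma aux_lim (a : ℝ) : Tendsto (fun M : ℕ => ((M:ℝ)+1)^2 * (Real.cos (a / ((M:ℝ)+1)) - 1))
    atTop (nhds (-(a^2/2))) := by
  have h0 : Tendsto (fun M : ℕ => a / 2 / ((M:ℝ)+1)) atTop (nhds 0) :=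
    tendsto_const_nhds.div_atTop (tendsto_atTop_add_const_right _ _ tendsto_natCast_atTop_atTop)
  have h1 := (Real.continuous_sinc.tendsto 0).comp h0
  rw [Real.sinc_zero] at h1
  have h2 := ((h1.pow 2).const_mul (-(a^2/2)))
  simp only [one_pow, mul_one] at h2
  refine h2.congr fun M => ?_
  have hM : ((M:ℝ)+1) ≠ 0 := by positivity
  simp only [Function.comp]
  have e : a / ((M:ℝ)+1) = 2 * (a / 2 / ((M:ℝ)+1)) := by ring
  rw [e, Real.cos_two_mul, Real.cos_sq']
  by_cases ha : a = 0
  · subst ha; norm_num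
  rw [Real.sinc_of_ne_zero (by positivity)]
  field_simp
  ring

lemma aux_floor {x : ℝ} (hx : x ∈ Icc (0:ℝ) 1) (a : ℝ) :
    Tendsto (fun M : ℕ => Real.sin (a * (⌊x * ((M:ℝ)+1)⌋₊ : ℝ) / ((M:ℝ)+1))) atTop
      (nhds (Real.sin (a * x))) := by
  have h := (tendsto_nat_floor_mul_div_atTop (R := ℝ) hx.1).comp
    ((tendsto_atTop_add_const_right _ (1:ℝ) tendsto_natCast_atTop_atTop) :
      Tendsto (fun M : ℕ => (M:ℝ)+1) atTop atTop)
  have h2 := (Real.continuous_sin.tendsto _).comp (h.const_mul a)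
  refine h2.congr fun M => ?_
  simp only [Function.comp, mul_div_assoc]

lemma aux_pos_tsum {s x y : ℝ} (hs : 0 < s) (hx : x ∈ Icc (0:ℝ) 1) (hy : y ∈ Icc (0:ℝ) 1) :
    0 ≤ ∑' n : ℕ, Real.exp (s * -((π * ((n:ℝ)+1))^2/2)) *
      (Real.sin (π * ((n:ℝ)+1) * x) * Real.sin (π * ((n:ℝ)+1) * y)) := by
  let f : ℕ → ℕ → ℝ := fun M n => if n < M then
    Real.exp (s * (((M:ℝ)+1)^2 * (Real.cos (π * ((n:ℝ)+1) / ((M:ℝ)+1)) - 1))) *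
      (Real.sin (π * ((n:ℝ) + 1) * (⌊x * ((M:ℝ)+1)⌋₊ : ℝ) / ((M:ℝ)+1)) *
      Real.sin (π * ((n:ℝ) + 1) * (⌊y * ((M:ℝ)+1)⌋₊ : ℝ) / ((M:ℝ)+1))) else 0
  have hT : Tendsto (fun M => ∑' n, f M n) atTop (nhds (∑' n : ℕ, Real.exp (s * -((π * ((n:ℝ)+1))^2/2)) *
      (Real.sin (π * ((n:ℝ)+1) * x) * Real.sin (π * ((n:ℝ)+1) * y)))) := by
    apply tendsto_tsum_of_dominated_convergence (aux_summable hs)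
    · intro n
      have h1 : Tendsto (fun M : ℕ => Real.exp (s * (((M:ℝ)+1)^2 *
          (Real.cos (π * ((n:ℝ)+1) / ((M:ℝ)+1)) - 1))) *
        (Real.sin (π * ((n:ℝ) + 1) * (⌊x * ((M:ℝ)+1)⌋₊ : ℝ) / ((M:ℝ)+1)) *
        Real.sin (π * ((n:ℝ) + 1) * (⌊y * ((M:ℝ)+1)⌋₊ : ℝ) / ((M:ℝ)+1)))) atTop
        (nhds (Real.exp (s * -((π * ((n:ℝ)+1))^2/2)) *
      (Real.sin (π * ((n:ℝ)+1) * x) * Real.sin (π * ((n:ℝ)+1) * y)))) :=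
        ((Real.continuous_exp.tendsto _).comp ((aux_lim _).const_mul s)).mul
          ((aux_floor hx _).mul (aux_floor hy _))
      refine h1.congr' ?_
      filter_upwards [eventually_gt_atTop n] with M hM
      simp [f, hM]
    · refine Eventually.of_forall fun M n => ?_
      by_cases hn : n < M
      · simp only [f, hn, if_true]
        rw [norm_mul, norm_mul, Real.norm_eq_abs, Real.norm_eq_abs, Real.norm_eq_abs, Real.abs_exp]
        have hb : ∀ a b : ℝ, |Real.sin a| * |Real.sin b| ≤ 1 := fun a b =>
          mul_le_one₀ (Real.abs_sin_le_one _) (abs_nonneg _) (Real.abs_sin_le_one _)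
        refine (mul_le_of_le_one_right (Real.exp_pos _).le (hb _ _)).trans ?_
        apply Real.exp_le_exp.2
        have hM1 : (0:ℝ) < (M:ℝ)+1 := by positivity
        have hnM : (n:ℝ) + 1 ≤ M := by exact_mod_cast hn
        have e : π * ((n:ℝ)+1) / ((M:ℝ)+1) = 2 * (π * ((n:ℝ)+1) / ((M:ℝ)+1) / 2) := by ring
        have hsin := Real.mul_le_sin (x := π * ((n:ℝ)+1) / ((M:ℝ)+1) / 2) (by positivity) (by
          apply div_le_div_of_nonneg_right _ (by norm_num)
          rw [div_le_iff₀ hM1]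
          exact mul_le_mul_of_nonneg_left (by linarith) Real.pi_pos.le)
        have e3 : 2 / π * (π * ((n:ℝ)+1) / ((M:ℝ)+1) / 2) = ((n:ℝ)+1) / ((M:ℝ)+1) := by
          field_simp
        rw [e3] at hsin
        have h5 := pow_le_pow_left₀ (by positivity) hsin 2
        rw [e, Real.cos_two_mul, Real.cos_sq']
        rw [div_pow, div_le_iff₀ (by positivity)] at h5
        nlinarith
      · simp only [f, hn, if_false, norm_zero]; positivity
  refine ge_of_tendsto' hT fun M => ?_
  rw [tsum_eq_sum (s := Finset.range M) (fun n hn => by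
    simp only [Finset.mem_range] at hn; simp [f, hn])]
  have hfl : ∀ z ∈ Icc (0:ℝ) 1, ⌊z * ((M:ℝ)+1)⌋₊ ≤ M + 1 := by
    intro z hz
    apply Nat.floor_le_of_le
    push_cast
    exact mul_le_of_le_one_left (by positivity) hz.2
  refine (aux_exp M (s * ((M:ℝ)+1)^2) (by positivity) _ _ (hfl x hx) (hfl y hy)).trans_eq ?_
  refine Finset.sum_congr rfl fun n hn => ?_
  simp only [f, Finset.mem_range.1 hn, if_true]
  rw [mul_assoc s]

lemma aux_int (a b : ℕ → ℝ) (ha : ∀ n, 0 < a n) (t : ℝ)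
    (hsum : Summable fun n => |b n| * (Real.exp (-a n * t) / a n))
    (hpt : ∀ s, t < s → Summable fun n => b n * Real.exp (-a n * s)) :
    IntegrableOn (fun s => ∑' n, b n * Real.exp (-a n * s)) (Ioi t) ∧
    ∫ s in Ioi t, ∑' n, b n * Real.exp (-a n * s) = ∑' n, b n * (Real.exp (-a n * t) / a n) := by
  have hI : ∀ n, Integrable (fun s => b n * Real.exp (-a n * s)) (volume.restrict (Ioi t)) :=
    fun n => (integrableOn_exp_mul_Ioi (neg_neg_of_pos (ha n)) t).const_mul _
  have hv : ∀ n, ∫ s in Ioi t, Real.exp (-a n * s) = Real.exp (-a n * t) / a n := fun n => by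
    rw [integral_exp_mul_Ioi (neg_neg_of_pos (ha n)), neg_div_neg_eq]
  have hN : ∀ n, ∫ s in Ioi t, ‖b n * Real.exp (-a n * s)‖ = |b n| * (Real.exp (-a n * t) / a n) := by
    intro n
    simp only [norm_mul, Real.norm_eq_abs, Real.abs_exp]
    rw [integral_const_mul, hv]
  have hS : Summable fun n => ∫ s in Ioi t, ‖b n * Real.exp (-a n * s)‖ := by
    simpa only [hN] using hsum
  constructor
  · refine ⟨?_, ?_⟩
    · refine aestronglyMeasurable_of_tendsto_ae (u := atTop)
        (f := fun (N : ℕ) s => ∑ n ∈ Finset.range N, b n * Real.exp (-a n * s)) ?_ ?_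
      · intro N
        exact (Continuous.aestronglyMeasurable (by fun_prop))
      · filter_upwards [ae_restrict_mem measurableSet_Ioi] with s hs
        exact (hpt s hs).hasSum.tendsto_sum_nat
    · rw [hasFiniteIntegral_iff_enorm]
      calc ∫⁻ s in Ioi t, ‖∑' n, b n * Real.exp (-a n * s)‖ₑ
          ≤ ∫⁻ s in Ioi t, ∑' n, ‖b n * Real.exp (-a n * s)‖ₑ :=
            lintegral_mono fun s => enorm_tsum_le_tsum_enorm
        _ = ∑' n, ∫⁻ s in Ioi t, ‖b n * Real.exp (-a n * s)‖ₑ :=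
            lintegral_tsum fun n => (hI n).1.enorm
        _ = ∑' n, ENNReal.ofReal (∫ s in Ioi t, ‖b n * Real.exp (-a n * s)‖) := by
            congr 1; ext n; rw [ofReal_integral_norm_eq_lintegral_enorm (hI n)]
        _ < ⊤ := hS.tsum_ofReal_lt_top
  · rw [← integral_tsum_of_summable_integral_norm hI hS]
    simp only [integral_const_mul, hv]

lemma aux_sin_le (n : ℕ) (θ : ℝ) : |Real.sin (n * θ)| ≤ n * |Real.sin θ| := by
  induction n with
  | zero => simp
  | succ n ih =>
    push_cast
    rw [add_mul, one_mul, Real.sin_add]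
    refine (abs_add_le _ _).trans ?_
    rw [abs_mul, abs_mul, add_mul, one_mul]
    exact add_le_add ((mul_le_of_le_one_right (abs_nonneg _) (Real.abs_cos_le_one _)).trans ih)
      (mul_le_of_le_one_left (abs_nonneg _) (Real.abs_cos_le_one _))

lemma aux_green {x y : ℝ} (hx : x ∈ Icc (0:ℝ) 1) (hy : y ∈ Icc (0:ℝ) 1) :
    ∑' n : ℕ, (2 * (Real.sin (π * ((n:ℝ)+1) * x) * Real.sin (π * ((n:ℝ)+1) * y))) *
      (1 / (π^2 * ((n:ℝ)+1)^2/2)) = 2 * (min x y * (1 - max x y)) := by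
  wlog hxy : x ≤ y generalizing x y
  · rw [min_comm, max_comm, ← this hy hx (le_of_not_ge hxy)]
    congr 1; ext n; ring
  rw [min_eq_left hxy, max_eq_right hxy]
  have hB : ∀ u ∈ Icc (0:ℝ) 1, HasSum (fun n : ℕ => 1 / ((n:ℝ)+1)^2 * Real.cos (2 * π * ((n:ℝ)+1) * u))
      (π^2 * (u^2 - u + 1/6)) := by
    intro u hu
    have h := hasSum_one_div_nat_pow_mul_cos (k := 1) one_ne_zero hu
    have h2 := (hasSum_nat_add_iff' 1).2 h
    have hb : (Polynomial.map (algebraMap ℚ ℝ) (Polynomial.bernoulli 2)).eval u = u^2 - u + 1/6 := by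
      simp [Polynomial.bernoulli, Finset.sum_range_succ, bernoulli_two, bernoulli_one]
      ring
    simp only [mul_one, hb] at h2
    have hv : π^2 * (u^2 - u + 1/6) = (-1) ^ (1 + 1) * (2 * π) ^ 2 / 2 / (Nat.factorial 2 : ℝ) *
        (u ^ 2 - u + 1 / 6) - ∑ x ∈ Finset.range 1, 1 / (x:ℝ) ^ 2 * Real.cos (2 * π * x * u) := by
      rw [Finset.sum_range_one, Nat.factorial_two]
      push_cast
      norm_num
      left
      ring
    rw [hv]
    convert! h2 using 2 with n
    push_cast; rfl
  have h1 := hB ((y - x)/2) ⟨by linarith, by linarith [hy.2, hx.1]⟩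
  have h2 := hB ((x + y)/2) ⟨by linarith [hx.1, hy.1], by linarith [hy.2, hx.2]⟩
  have h3 := (h1.sub h2).mul_left (2 / π^2)
  have hpi := Real.pi_ne_zero
  have hv : 2 * (x * (1 - y)) = 2 / π ^ 2 * (π ^ 2 * (((y - x) / 2) ^ 2 - (y - x) / 2 + 1 / 6) -
    π ^ 2 * (((x + y) / 2) ^ 2 - (x + y) / 2 + 1 / 6)) := by
    field_simp; ring
  rw [hv, ← h3.tsum_eq]
  congr 1; ext n
  have e1 : 2 * π * ((n:ℝ)+1) * ((y-x)/2) = π * ((n:ℝ)+1) * y - π * ((n:ℝ)+1) * x := by ring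
  have e2 : 2 * π * ((n:ℝ)+1) * ((x+y)/2) = π * ((n:ℝ)+1) * y + π * ((n:ℝ)+1) * x := by ring
  rw [e1, e2, Real.cos_sub, Real.cos_add]
  field_simp
  ring

lemma pker_one (s x y : ℝ) : pker 1 s x y = ∑' n : ℕ,
    (2 * (Real.sin (π * ((n:ℝ)+1) * x) * Real.sin (π * ((n:ℝ)+1) * y))) *
      Real.exp (-(π^2 * ((n:ℝ)+1)^2/2) * s) := by
  unfold pker
  rw [← tsum_mul_left]
  congr 1; ext n
  have e : -(π^2) * ((n : ℝ) + 1)^2 * s / (2 * 1^2) = -(π^2 * ((n:ℝ)+1)^2/2) * s := by ring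
  rw [e, div_one, div_one, div_one]
  ring

lemma pker_nonneg {s x y : ℝ} (hs : 0 < s) (hx : x ∈ Icc (0:ℝ) 1) (hy : y ∈ Icc (0:ℝ) 1) :
    0 ≤ pker 1 s x y := by
  have h := mul_nonneg (zero_le_two (α := ℝ)) (aux_pos_tsum hs hx hy)
  rw [← tsum_mul_left] at h
  rw [pker_one]
  refine h.trans_eq ?_
  congr 1; ext n
  have e : -(π^2 * ((n:ℝ)+1)^2/2) * s = s * -((π * ((n:ℝ)+1))^2/2) := by ring
  rw [e]; ring

lemma aux_ss (a b : ℝ) : |2 * (Real.sin a * Real.sin b)| ≤ 2 := by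
  rw [abs_mul, abs_mul, abs_two]
  have := mul_le_one₀ (Real.abs_sin_le_one a) (abs_nonneg _) (Real.abs_sin_le_one b)
  linarith

lemma pker_summable {s : ℝ} (hs : 0 < s) (x y : ℝ) : Summable fun n : ℕ =>
    (2 * (Real.sin (π * ((n:ℝ)+1) * x) * Real.sin (π * ((n:ℝ)+1) * y))) *
      Real.exp (-(π^2 * ((n:ℝ)+1)^2/2) * s) := by
  refine Summable.of_norm_bounded ((aux_summable hs).mul_left 2) fun n => ?_
  rw [norm_mul, Real.norm_eq_abs, Real.norm_eq_abs, Real.abs_exp]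
  refine mul_le_mul (aux_ss _ _) (Real.exp_le_exp.2 ?_) (Real.exp_pos _).le (by norm_num)
  have : (4:ℝ) ≤ π^2 := by nlinarith [Real.pi_gt_three]
  have h2 : 0 ≤ ((n:ℝ)+1)^2 * s := by positivity
  nlinarith

lemma pker_int {x y : ℝ} (hx : x ∈ Icc (0:ℝ) 1) (hy : y ∈ Icc (0:ℝ) 1) :
    IntegrableOn (fun s => pker 1 s x y) (Ioi 0) ∧
    ∫ s in Ioi 0, pker 1 s x y = 2 * (min x y * (1 - max x y)) := by
  have hpi := Real.pi_pos
  have h := aux_int (fun n => π^2 * ((n:ℝ)+1)^2/2)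
    (fun n => 2 * (Real.sin (π * ((n:ℝ)+1) * x) * Real.sin (π * ((n:ℝ)+1) * y)))
    (fun n => by positivity) 0 ?_ (fun s hs => pker_summable hs x y)
  · simp only [← pker_one] at h
    refine ⟨h.1, h.2.trans ?_⟩
    rw [← aux_green hx hy]
    simp
  · have h2 : Summable fun n : ℕ => 1 / ((n:ℝ)+1)^2 := by
      have := (summable_nat_add_iff 1).2 (Real.summable_one_div_nat_pow.2 (one_lt_two))
      simpa using this
    refine Summable.of_nonneg_of_le (fun n => by positivity) (fun n => ?_) (h2.mul_left 2)
    refine mul_le_mul (aux_ss _ _) ?_ (by positivity) (by norm_num)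
    simp only [mul_zero, Real.exp_zero]
    apply one_div_le_one_div_of_le (by positivity)
    have : (4:ℝ) ≤ π^2 := by nlinarith [Real.pi_gt_three]
    have h2 : 0 ≤ ((n:ℝ)+1)^2 := by positivity
    nlinarith

lemma E_summable {s : ℝ} (hs : 0 < s) : Summable fun n : ℕ =>
    (π^2 * ((n:ℝ)+2)^2) * Real.exp (-(π^2 * (((n:ℝ)+2)^2 - 1)/2) * s) := by
  have hr : ‖Real.exp (-s)‖ < 1 := by
    rw [Real.norm_eq_abs, Real.abs_exp, Real.exp_lt_one_iff]; linarith
  have h1 : Summable fun n : ℕ => (n:ℝ)^2 * Real.exp (-s) ^ n :=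
    summable_pow_mul_geometric_of_norm_lt_one 2 hr
  have h2 : Summable fun n : ℕ => ((n+2:ℕ):ℝ)^2 * Real.exp (-s) ^ (n+2) :=
    (summable_nat_add_iff (f := fun n : ℕ => (n:ℝ)^2 * Real.exp (-s) ^ n) 2).2 h1
  have h3 := h2.mul_left (π^2 * Real.exp (2 * s))
  refine Summable.of_nonneg_of_le (fun n => by positivity) (fun n => ?_) h3
  have e : Real.exp (2 * s) * Real.exp (-s) ^ (n+2) = Real.exp (-(n * s)) := by
    rw [← Real.exp_nat_mul, ← Real.exp_add]; congr 1; push_cast; ring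
  have e2 : π^2 * Real.exp (2 * s) * (((n+2:ℕ):ℝ)^2 * Real.exp (-s) ^ (n+2)) =
    (π^2 * ((n:ℝ)+2)^2) * Real.exp (-(n * s)) := by
      rw [← e]; push_cast; ring
  rw [e2]
  refine mul_le_mul_of_nonneg_left (Real.exp_le_exp.2 ?_) (by positivity)
  have : (4:ℝ) ≤ π^2 := by nlinarith [Real.pi_gt_three]
  have hn := Nat.cast_nonneg (α := ℝ) n
  have h6 : (n:ℝ) ≤ ((n:ℝ)+2)^2 - 1 := by nlinarith
  have h7 := mul_le_mul_of_nonneg_right this (hn.trans h6)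
  have h5 : (n:ℝ) ≤ π^2 * (((n:ℝ)+2)^2 - 1)/2 := by linarith
  have h8 := mul_le_mul_of_nonneg_right h5 hs.le
  linarith

lemma E_eq (s : ℝ) : Efun s = ∑' n : ℕ,
    (π^2 * ((n:ℝ)+2)^2) * Real.exp (-(π^2 * (((n:ℝ)+2)^2 - 1)/2) * s) := by
  unfold Efun
  rw [← tsum_mul_left]
  congr 1; ext n
  have e : -(π^2) * (((n : ℝ) + 2)^2 - 1) * s / 2 = -(π^2 * (((n:ℝ)+2)^2 - 1)/2) * s := by ring
  rw [e]; ring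

lemma E_nonneg (s : ℝ) : 0 ≤ Efun s := by
  rw [E_eq]; exact tsum_nonneg fun n => by positivity

lemma aux_c (n : ℕ) : 1 ≤ π^2 * (((n:ℝ)+2)^2 - 1)/2 := by
  have : (4:ℝ) ≤ π^2 := by nlinarith [Real.pi_gt_three]
  have hn := Nat.cast_nonneg (α := ℝ) n
  have h6 : 1 ≤ ((n:ℝ)+2)^2 - 1 := by nlinarith
  have h7 := mul_le_mul_of_nonneg_right this (zero_le_one.trans h6)
  linarith

lemma E_int {t : ℝ} (ht : 0 < t) : IntegrableOn Efun (Ioi t) ∧ ∫ s in Ioi t, Efun s ≤ Efun t := by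
  have hle : ∀ n : ℕ, (π^2 * ((n:ℝ)+2)^2) * (Real.exp (-(π^2 * (((n:ℝ)+2)^2 - 1)/2) * t) / 
      (π^2 * (((n:ℝ)+2)^2 - 1)/2)) ≤
      (π^2 * ((n:ℝ)+2)^2) * Real.exp (-(π^2 * (((n:ℝ)+2)^2 - 1)/2) * t) := fun n =>
    mul_le_mul_of_nonneg_left (div_le_self (Real.exp_pos _).le (aux_c n)) (by positivity)
  have hs : Summable fun n : ℕ => (π^2 * ((n:ℝ)+2)^2) * (Real.exp (-(π^2 * (((n:ℝ)+2)^2 - 1)/2) * t) / 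
      (π^2 * (((n:ℝ)+2)^2 - 1)/2)) :=
    Summable.of_nonneg_of_le (fun n => by
      have := aux_c n
      exact mul_nonneg (by positivity) (div_nonneg (Real.exp_pos _).le (by linarith))) hle (E_summable ht)
  have h := aux_int (fun n => π^2 * (((n:ℝ)+2)^2 - 1)/2) (fun n => π^2 * ((n:ℝ)+2)^2)
    (fun n => lt_of_lt_of_le one_pos (aux_c n)) t (by
      refine hs.congr fun n => ?_
      rw [abs_of_nonneg (by positivity)])
    (fun s hs => E_summable (ht.trans hs))
  simp only [← E_eq] at h
  refine ⟨h.1, ?_⟩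
  rw [h.2, E_eq]
  exact hs.tsum_le_tsum hle (E_summable ht)

lemma aux_sin_nonneg {x : ℝ} (hx : x ∈ Icc (0:ℝ) 1) : 0 ≤ Real.sin (π * x) :=
  Real.sin_nonneg_of_nonneg_of_le_pi (mul_nonneg Real.pi_pos.le hx.1)
    (mul_le_of_le_one_right Real.pi_pos.le hx.2)

lemma D_bound {s x y : ℝ} (hs : 0 < s) (hx : x ∈ Icc (0:ℝ) 1) (hy : y ∈ Icc (0:ℝ) 1) :
    |Real.exp (π^2 * s / 2) * pker 1 s x y - 2 * (Real.sin (π * x) * Real.sin (π * y))| ≤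
      Efun s * (Real.sin (π * x) * Real.sin (π * y)) := by
  have h0 := (pker_summable hs x y).mul_left (Real.exp (π^2 * s / 2))
  have h1 := h0.tsum_eq_zero_add
  rw [tsum_mul_left, ← pker_one] at h1
  have e0 : Real.exp (π^2 * s / 2) * ((2 * (Real.sin (π * (((0:ℕ):ℝ)+1) * x) *
      Real.sin (π * (((0:ℕ):ℝ)+1) * y))) * Real.exp (-(π^2 * (((0:ℕ):ℝ)+1)^2/2) * s)) =
      2 * (Real.sin (π * x) * Real.sin (π * y)) := by
    have : Real.exp (π^2 * s / 2) * Real.exp (-(π^2 * (((0:ℕ):ℝ)+1)^2/2) * s) = 1 := by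
      rw [← Real.exp_add, Real.exp_eq_one_iff]; push_cast; ring
    calc _ = (Real.exp (π^2 * s / 2) * Real.exp (-(π^2 * (((0:ℕ):ℝ)+1)^2/2) * s)) *
        (2 * (Real.sin (π * (((0:ℕ):ℝ)+1) * x) * Real.sin (π * (((0:ℕ):ℝ)+1) * y))) := by ring
      _ = _ := by rw [this]; simp
  rw [h1, e0, add_sub_cancel_left, E_eq, ← tsum_mul_right, ← Real.norm_eq_abs]
  refine tsum_of_norm_bounded ((E_summable hs).mul_right _).hasSum fun n => ?_
  have e : Real.exp (π^2 * s / 2) * Real.exp (-(π^2 * (((n+1:ℕ):ℝ)+1)^2/2) * s) =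
      Real.exp (-(π^2 * (((n:ℝ)+2)^2 - 1)/2) * s) := by
    rw [← Real.exp_add]; congr 1; push_cast; ring
  have hsx : ∀ z ∈ Icc (0:ℝ) 1, |Real.sin (π * (((n+1:ℕ):ℝ)+1) * z)| ≤ ((n:ℝ)+2) * Real.sin (π * z) := by
    intro z hz
    have := aux_sin_le (n+2) (π * z)
    rw [abs_of_nonneg (aux_sin_nonneg hz)] at this
    push_cast at this ⊢
    convert this using 3
    ring
  have hxy := mul_le_mul (hsx x hx) (hsx y hy) (abs_nonneg _)
    (mul_nonneg (by positivity) (aux_sin_nonneg hx))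
  have hpi : (2:ℝ) ≤ π^2 := by nlinarith [Real.pi_gt_three]
  have hss := mul_nonneg (aux_sin_nonneg hx) (aux_sin_nonneg hy)
  rw [mul_left_comm, e, norm_mul, norm_mul, norm_mul, Real.norm_eq_abs, Real.norm_eq_abs,
    Real.norm_eq_abs, Real.norm_eq_abs, Real.abs_exp, abs_two, mul_right_comm (π^2 * _)]
  refine mul_le_mul_of_nonneg_right ?_ (Real.exp_pos _).le
  have h7 : 0 ≤ ((n:ℝ)+2)^2 * (Real.sin (π * x) * Real.sin (π * y)) := by positivity
  nlinarith

lemma ss_le {x y : ℝ} (hx : x ∈ Icc (0:ℝ) 1) (hy : y ∈ Icc (0:ℝ) 1) :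
    Real.sin (π * x) * Real.sin (π * y) ≤ π^2 * (min x y * (1 - max x y)) := by
  wlog hxy : x ≤ y generalizing x y
  · rw [min_comm, max_comm, mul_comm (Real.sin _)]; exact this hy hx (le_of_not_ge hxy)
  rw [min_eq_left hxy, max_eq_right hxy]
  have h1 : Real.sin (π * x) ≤ π * x := Real.sin_le (mul_nonneg Real.pi_pos.le hx.1)
  have h2 : Real.sin (π * y) ≤ π * (1 - y) := by
    rw [← Real.sin_pi_sub, show π - π * y = π * (1 - y) by ring]
    exact Real.sin_le (mul_nonneg Real.pi_pos.le (by linarith [hy.2]))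
  refine (mul_le_mul h1 h2 (aux_sin_nonneg hy) (mul_nonneg Real.pi_pos.le hx.1)).trans_eq (by ring)

lemma D_int {x y : ℝ} (hx : x ∈ Icc (0:ℝ) 1) (hy : y ∈ Icc (0:ℝ) 1) :
    IntegrableOn (fun s => Real.exp (π^2 * s / 2) * pker 1 s x y -
      2 * (Real.sin (π * x) * Real.sin (π * y))) (Ioi 0) ∧
    ∫ s in Ioi 0, |Real.exp (π^2 * s / 2) * pker 1 s x y -
      2 * (Real.sin (π * x) * Real.sin (π * y))| ≤
      (2 * Real.exp (π^2 / 2) + (2 + Efun 1) * π^2) * (min x y * (1 - max x y)) := by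
  set c := Real.sin (π * x) * Real.sin (π * y) with hc
  have hc0 : 0 ≤ c := mul_nonneg (aux_sin_nonneg hx) (aux_sin_nonneg hy)
  obtain ⟨hp, hpv⟩ := pker_int hx hy
  have hm : AEStronglyMeasurable (fun s => Real.exp (π^2 * s / 2) * pker 1 s x y - 2 * c)
      (volume.restrict (Ioi 0)) :=
    ((Continuous.aestronglyMeasurable (by fun_prop)).mul hp.1).sub aestronglyMeasurable_const
  have hsub1 : Ioc (0:ℝ) 1 ⊆ Ioi 0 := fun s hs => hs.1
  have hsub2 : Ioi (1:ℝ) ⊆ Ioi 0 := fun s hs => lt_trans (one_pos : (0:ℝ) < 1) (mem_Ioi.1 hs)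
  have hb1 : ∀ s ∈ Ioc (0:ℝ) 1, |Real.exp (π^2 * s / 2) * pker 1 s x y - 2 * c| ≤
      Real.exp (π^2 / 2) * pker 1 s x y + 2 * c := by
    intro s hs
    have hpn := pker_nonneg hs.1 hx hy
    have he : Real.exp (π^2 * s / 2) ≤ Real.exp (π^2 / 2) := by
      apply Real.exp_le_exp.2
      have := mul_le_mul_of_nonneg_left hs.2 (sq_nonneg π)
      linarith
    have h1 := mul_le_mul_of_nonneg_right he hpn
    have h2 := mul_nonneg (Real.exp_pos (π^2 * s / 2)).le hpn
    rw [abs_le]; constructor <;> linarith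
  have hB1 : IntegrableOn (fun s => Real.exp (π^2 / 2) * pker 1 s x y + 2 * c) (Ioc 0 1) :=
    ((hp.mono_set hsub1).const_mul _).add (integrableOn_const (by simp))
  have hB2 : IntegrableOn (fun s => Efun s * c) (Ioi 1) := (E_int one_pos).1.mul_const _
  have hI1 : IntegrableOn (fun s => Real.exp (π^2 * s / 2) * pker 1 s x y - 2 * c) (Ioc 0 1) := by
    refine Integrable.mono' hB1 (hm.mono_set hsub1) ?_
    filter_upwards [ae_restrict_mem measurableSet_Ioc] with s hs using hb1 s hs
  have hI2 : IntegrableOn (fun s => Real.exp (π^2 * s / 2) * pker 1 s x y - 2 * c) (Ioi 1) := by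
    refine Integrable.mono' hB2 (hm.mono_set hsub2) ?_
    filter_upwards [ae_restrict_mem measurableSet_Ioi] with s hs using D_bound (hsub2 hs) hx hy
  have hU : Ioi (0:ℝ) = Ioc 0 1 ∪ Ioi 1 := (Ioc_union_Ioi_eq_Ioi zero_le_one).symm
  refine ⟨by rw [hU]; exact hI1.union hI2, ?_⟩
  rw [hU, setIntegral_union (Ioc_disjoint_Ioi le_rfl) measurableSet_Ioi hI1.abs hI2.abs]
  have h1 : ∫ s in Ioc 0 1, |Real.exp (π^2 * s / 2) * pker 1 s x y - 2 * c| ≤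
      Real.exp (π^2 / 2) * (2 * (min x y * (1 - max x y))) + 2 * c := by
    refine (setIntegral_mono_on hI1.abs hB1 measurableSet_Ioc hb1).trans ?_
    rw [integral_add ((hp.mono_set hsub1).const_mul _) (integrableOn_const (by simp)),
      integral_const_mul, setIntegral_const]
    have : ∫ s in Ioc 0 1, pker 1 s x y ≤ ∫ s in Ioi 0, pker 1 s x y := by
      refine setIntegral_mono_set hp ?_ (LE.le.eventuallyLE hsub1)
      filter_upwards [ae_restrict_mem measurableSet_Ioi] with s hs using pker_nonneg hs hx hy
    rw [hpv] at this
    have h3 := mul_le_mul_of_nonneg_left this (Real.exp_pos (π^2/2)).le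
    simp
    linarith
  have h2 : ∫ s in Ioi 1, |Real.exp (π^2 * s / 2) * pker 1 s x y - 2 * c| ≤ Efun 1 * c := by
    refine (setIntegral_mono_on hI2.abs hB2 measurableSet_Ioi
      fun s hs => D_bound (hsub2 hs) hx hy).trans ?_
    rw [integral_mul_const]
    exact mul_le_mul_of_nonneg_right (E_int one_pos).2 hc0
  have h3 := ss_le hx hy
  rw [← hc] at h3
  have h4 := mul_le_mul_of_nonneg_left h3 (add_nonneg zero_le_two (E_nonneg 1))
  linarith

/-- `|J(x,y,S) − 2·λ(S)·sin(πx)·sin(πy)| ≤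
C·min( min(x,y)(1−max(x,y)), E_{inf S}·sin(πx)·sin(πy) )`, the second term of
the minimum being discarded (i.e. `+∞`) when `inf S = 0`. -/
theorem stmt9 :
    ∃ C : ℝ, 0 < C ∧ ∀ x ∈ Set.Icc (0:ℝ) 1, ∀ y ∈ Set.Icc (0:ℝ) 1, ∀ S : Set ℝ,
      MeasurableSet S → S ⊆ Set.Ioi 0 → volume S < ⊤ →
      |Jfun x y S - 2 * (volume S).toReal * Real.sin (π * x) * Real.sin (π * y)| ≤
          C * (min x y * (1 - max x y)) ∧
      (0 < sInf S →
        |Jfun x y S - 2 * (volume S).toReal * Real.sin (π * x) * Real.sin (π * y)| ≤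
          C * (Efun (sInf S) * Real.sin (π * x) * Real.sin (π * y))) := by
  have hE1 := E_nonneg 1
  have hexp : 1 ≤ Real.exp (π^2 / 2) := Real.one_le_exp (by positivity)
  have hC : 1 ≤ 2 * Real.exp (π^2 / 2) + (2 + Efun 1) * π^2 := by
    have : 0 ≤ (2 + Efun 1) * π^2 := by positivity
    linarith
  refine ⟨2 * Real.exp (π^2 / 2) + (2 + Efun 1) * π^2, by linarith, ?_⟩
  intro x hx y hy S hS hS0 hSfin
  obtain ⟨hD, hDv⟩ := D_int hx hy
  have hDS := hD.mono_set hS0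
  have hJ : Jfun x y S - 2 * (volume S).toReal * Real.sin (π * x) * Real.sin (π * y) =
      ∫ s in S, (Real.exp (π^2 * s / 2) * pker 1 s x y -
        2 * (Real.sin (π * x) * Real.sin (π * y))) := by
    have hc : IntegrableOn (fun _ : ℝ => 2 * (Real.sin (π * x) * Real.sin (π * y))) S :=
      integrableOn_const hSfin.ne
    have h1 := integral_add hDS hc
    simp only [sub_add_cancel] at h1
    unfold Jfun
    rw [h1, setIntegral_const, smul_eq_mul, Measure.real]
    ring
  have habs : |∫ s in S, (Real.exp (π^2 * s / 2) * pker 1 s x y -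
        2 * (Real.sin (π * x) * Real.sin (π * y)))| ≤
      ∫ s in S, |Real.exp (π^2 * s / 2) * pker 1 s x y -
        2 * (Real.sin (π * x) * Real.sin (π * y))| := abs_integral_le_integral_abs
  rw [hJ]
  refine ⟨habs.trans (le_trans ?_ hDv), fun ht => habs.trans ?_⟩
  · exact setIntegral_mono_set hD.abs (ae_of_all _ fun s => abs_nonneg _)
      (LE.le.eventuallyLE hS0)
  · have hsub : S ⊆ Ici (sInf S) := fun s hs => csInf_le ⟨0, fun z hz => (hS0 hz).le⟩ hs
    obtain ⟨hEi, hEv⟩ := E_int ht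
    have hEi' : IntegrableOn Efun (Ici (sInf S)) := (integrableOn_Ici_iff_integrableOn_Ioi (by simp)).2 hEi
    have hc0 : 0 ≤ Real.sin (π * x) * Real.sin (π * y) :=
      mul_nonneg (aux_sin_nonneg hx) (aux_sin_nonneg hy)
    have h1 : ∫ s in S, |Real.exp (π^2 * s / 2) * pker 1 s x y -
        2 * (Real.sin (π * x) * Real.sin (π * y))| ≤
        ∫ s in S, Efun s * (Real.sin (π * x) * Real.sin (π * y)) :=
      setIntegral_mono_on hDS.abs ((hEi'.mono_set hsub).mul_const _) hS
        fun s hs => D_bound (hS0 hs) hx hy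
    have h2 : ∫ s in S, Efun s ≤ ∫ s in Ici (sInf S), Efun s :=
      setIntegral_mono_set hEi' (ae_of_all _ fun s => E_nonneg s)
        (LE.le.eventuallyLE hsub)
    rw [integral_Ici_eq_integral_Ioi] at h2
    rw [integral_mul_const] at h1
    have h3 := mul_le_mul_of_nonneg_right (h2.trans hEv) hc0
    have h4 : 0 ≤ Efun (sInf S) * (Real.sin (π * x) * Real.sin (π * y)) :=
      mul_nonneg (E_nonneg _) hc0
    rw [mul_assoc (Efun _)]
    exact (h1.trans h3).trans (le_mul_of_one_le_left h4 hC)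
end

section
/- For every c > 0 there exists a constant C, depending only on c, such that for every a > 0, every x ∈ (0,a) and every t ≥ 0: ∫_0^t ∫_0^a p^{taboo,a}_s(x,y)·e^{−cy} dy ds ≤ C·( t/a³ + min(1, 1/x) ). -/
open Real MeasureTheory Set Filter

/-- Transition density of the Brownian taboo process on `(0,a)`. -/
noncomputable def ptaboo (a t x y : ℝ) : ℝ :=
  (Real.sin (π * y / a) / Real.sin (π * x / a)) * Real.exp (π^2 * t / (2 * a^2)) *
    pker a t x y


/-- Discrete positivity. -/
lemma disc_pos (β : ℕ → ℝ) (hβ : Summable (fun n => |β n|)) (N : ℕ)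
    (h : ∀ k : ℕ, k ≤ N → 0 ≤ ∑' n, β n * Real.sin (((n:ℝ)+1) * (k * (π / N)))) (m : ℕ) :
    ∀ k : ℕ, k ≤ N → 0 ≤ ∑' n, β n * Real.cos (((n:ℝ)+1) * (π / N)) ^ m *
      Real.sin (((n:ℝ)+1) * (k * (π / N))) := by
  induction m with
  | zero => simpa using h
  | succ m ih =>
    intro k hk
    have hs : ∀ j : ℝ, Summable (fun n : ℕ => β n * Real.cos (((n:ℝ)+1) * (π / N)) ^ m *
      Real.sin (((n:ℝ)+1) * (j * (π / N)))) := by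
      intro j
      refine Summable.of_norm_bounded hβ (fun n => ?_)
      rw [norm_mul, norm_mul, norm_pow, Real.norm_eq_abs, mul_assoc]
      refine mul_le_of_le_one_right (abs_nonneg _) ?_
      refine mul_le_one₀ (pow_le_one₀ (norm_nonneg _) (Real.abs_cos_le_one _)) (norm_nonneg _)
        (Real.abs_sin_le_one _)
    rcases Nat.eq_zero_or_pos k with rfl | hk0
    · simp
    rcases hk.lt_or_eq with hlt | rfl
    · obtain ⟨j, rfl⟩ : ∃ j, k = j + 1 := ⟨k - 1, by omega⟩
      have e : (fun n : ℕ => β n * Real.cos (((n:ℝ)+1) * (π / N)) ^ (m+1) *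
        Real.sin (((n:ℝ)+1) * (((j+1 : ℕ):ℝ) * (π / N)))) = fun n : ℕ =>
          (1/2) * (β n * Real.cos (((n:ℝ)+1) * (π / N)) ^ m *
            Real.sin (((n:ℝ)+1) * (((j+2 : ℕ):ℝ) * (π / N))) +
          β n * Real.cos (((n:ℝ)+1) * (π / N)) ^ m *
            Real.sin (((n:ℝ)+1) * (((j : ℕ):ℝ) * (π / N)))) := by
        funext n
        have e1 : ((n:ℝ)+1) * (((j+2 : ℕ):ℝ) * (π / N)) =
          ((n:ℝ)+1) * (((j+1 : ℕ):ℝ) * (π / N)) + ((n:ℝ)+1) * (π / N) := by push_cast; ring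
        have e2 : ((n:ℝ)+1) * (((j : ℕ):ℝ) * (π / N)) =
          ((n:ℝ)+1) * (((j+1 : ℕ):ℝ) * (π / N)) - ((n:ℝ)+1) * (π / N) := by push_cast; ring
        rw [e1, e2, Real.sin_add, Real.sin_sub]
        ring
      rw [e, tsum_mul_left, (hs _).tsum_add (hs _)]
      have := ih (j+2) (by omega)
      have := ih j (by omega)
      positivity
    · have e : (fun n : ℕ => β n * Real.cos (((n:ℝ)+1) * (π / k)) ^ (m+1) *
        Real.sin (((n:ℝ)+1) * ((k:ℝ) * (π / k)))) = fun n : ℕ => 0 := by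
        funext n
        have hk' : (k:ℝ) ≠ 0 := by positivity
        have : ((n:ℝ)+1) * ((k:ℝ) * (π / k)) = ((n+1 : ℕ):ℝ) * π := by
          push_cast; field_simp
        rw [this, Real.sin_nat_mul_pi, mul_zero]
      rw [e]; simp

/-- Positivity of the killed heat semigroup on absolutely convergent sine series. -/
lemma heat_pos (β : ℕ → ℝ) (hβ : Summable (fun n => |β n|)) 
    (h : ∀ u : ℝ, 0 ≤ u → u ≤ 1 → 0 ≤ ∑' n, β n * Real.sin (((n:ℝ)+1) * (u * π)))
    (u : ℝ) (hu0 : 0 ≤ u) (hu1 : u ≤ 1) (τ : ℝ) (hτ : 0 < τ) :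
    0 ≤ ∑' n, β n * Real.exp (-(((n:ℝ)+1) * π)^2 * τ / 2) * Real.sin (((n:ℝ)+1) * (u * π)) := by
  let X : ℕ → ℝ := fun m => Real.sqrt (m / τ)
  have hX : Tendsto X atTop atTop := by
    refine Real.tendsto_sqrt_atTop.comp ?_
    exact (tendsto_natCast_atTop_atTop).atTop_div_const hτ
  let N : ℕ → ℕ := fun m => ⌈X m⌉₊
  have hN : Tendsto N atTop atTop := tendsto_nat_ceil_atTop.comp hX
  have hN' : Tendsto (fun m => (N m : ℝ)) atTop atTop := tendsto_natCast_atTop_atTop.comp hN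
  have hr : Tendsto (fun m => (N m : ℝ) / X m) atTop (nhds 1) :=
    (tendsto_nat_ceil_div_atTop (R := ℝ)).comp hX
  let k : ℕ → ℕ := fun m => ⌊u * N m⌋₊
  have hk : Tendsto (fun m => (k m : ℝ) / N m) atTop (nhds u) :=
    (tendsto_nat_floor_mul_div_atTop hu0).comp hN'
  have key : Tendsto (fun m => ∑' n : ℕ, β n * Real.cos (((n:ℝ)+1) * (π / N m)) ^ m *
      Real.sin (((n:ℝ)+1) * (k m * (π / N m)))) atTop
      (nhds (∑' n, β n * Real.exp (-(((n:ℝ)+1) * π)^2 * τ / 2) *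
        Real.sin (((n:ℝ)+1) * (u * π)))) := by
    refine tendsto_tsum_of_dominated_convergence hβ (fun n => ?_) (Eventually.of_forall ?_)
    · refine (Tendsto.mul tendsto_const_nhds ?_).mul ?_
      · suffices hh : Tendsto (fun m : ℕ => (m:ℝ) * (Real.cos (((n:ℝ)+1) * (π / N m)) - 1)) atTop
            (nhds (-(((n:ℝ)+1) * π)^2 * τ / 2)) by
          refine (Real.tendsto_one_add_pow_exp_of_tendsto hh).congr (fun m => ?_)
          rw [add_sub_cancel]
        set z : ℝ := ((n:ℝ)+1) * π with hz
        have hz0 : z ≠ 0 := by positivity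
        have hs : Tendsto (fun m => Real.sinc (z / (2 * N m))) atTop (nhds 1) := by
          have h1 : Tendsto (fun m => z / (2 * (N m:ℝ))) atTop (nhds 0) :=
            Tendsto.div_atTop tendsto_const_nhds
              (Tendsto.const_mul_atTop (by norm_num) hN')
          have := (Real.continuous_sinc.tendsto 0).comp h1
          simpa [Function.comp_def] using this
        have hlim : Tendsto (fun m => -(z^2) * τ / 2 * ((N m : ℝ) / X m)⁻¹ ^ 2 *
            Real.sinc (z / (2 * N m)) ^ 2) atTop (nhds (-(z^2) * τ / 2)) := by
          have := ((hr.inv₀ one_ne_zero).pow 2 |>.const_mul (-(z^2) * τ / 2)).mul (hs.pow 2)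
          simpa using this
        refine hlim.congr' ?_
        filter_upwards [hN'.eventually_gt_atTop 0, hX.eventually_gt_atTop 0] with m h1 h2
        have hX2 : X m ^ 2 = m / τ := Real.sq_sqrt (by positivity)
        have hne : z / (2 * N m) ≠ 0 := by positivity
        rw [Real.sinc_of_ne_zero hne]
        have e1 : ((n:ℝ)+1) * (π / N m) = 2 * (z / (2 * N m)) := by rw [hz]; field_simp
        have e2 : (m:ℝ) = τ * X m ^ 2 := by rw [hX2]; field_simp
        rw [e1, Real.cos_two_mul, Real.cos_sq', e2]
        field_simp
        ring
      · refine (Real.continuous_sin.tendsto _).comp ?_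
        have := (hk.mul_const π).const_mul ((n:ℝ)+1)
        refine this.congr (fun m => ?_)
        ring
    · intro m n
      rw [norm_mul, norm_mul, norm_pow, Real.norm_eq_abs, mul_assoc]
      refine mul_le_of_le_one_right (abs_nonneg _) ?_
      refine mul_le_one₀ (pow_le_one₀ (norm_nonneg _) (Real.abs_cos_le_one _)) (norm_nonneg _)
        (Real.abs_sin_le_one _)
  refine ge_of_tendsto key ?_
  filter_upwards [hN'.eventually_gt_atTop 0] with m hm
  refine disc_pos β hβ (N m) (fun j hj => ?_) m (k m) ?_
  · have := h (j / N m) (by positivity) (by rw [div_le_one hm]; exact_mod_cast hj)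
    have e : (j:ℝ) / N m * π = j * (π / N m) := by ring
    rwa [e] at this
  · refine Nat.floor_le_of_le ?_
    nlinarith

/-- Pointwise convergence of sine series. -/
lemma sine_series (a : ℝ) (ha : 0 < a) (f : ℝ → ℝ) (hf : Continuous f) (h0 : f 0 = 0)
    (hfa : f a = 0) (β : ℕ → ℝ)
    (hc : ∀ n : ℕ, ∫ y in (0:ℝ)..a, f y * Real.sin (n * (π / a * y)) = a / 2 * β n)
    (hβ : Summable (fun n => |β n|)) (y : ℝ) (hy0 : 0 ≤ y) (hya : y < a) :
    HasSum (fun n : ℕ => β n * Real.sin (n * (π / a * y))) (f y) := by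
  have : Fact (0 < 2 * a) := ⟨by linarith⟩
  let F : ℝ → ℂ := fun y => ((f (max y 0) - f (max (-y) 0) : ℝ) : ℂ)
  have hF : Continuous F := by
    simp only [F]; fun_prop
  have hL : Continuous (AddCircle.liftIco (2*a) (-a) F) := by
    refine AddCircle.liftIco_continuous ?_ hF.continuousOn
    have : -a + 2 * a = a := by ring
    simp [F, this, ha.le, hfa, h0]
  have hcoef : ∀ n : ℤ, fourierCoeff (AddCircle.liftIco (2*a) (-a) F) n =
      (1 / (2 * a) : ℝ) • (-2 * Complex.I * ((∫ y in (0:ℝ)..a, f y * Real.sin (n * (π / a * y)) : ℝ) : ℂ)) := by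
    intro n
    rw [fourierCoeff_eq_intervalIntegral _ _ (-a)]
    congr 1
    have e : -a + 2 * a = a := by ring
    rw [intervalIntegral.integral_congr_Ioo_of_le (g := fun x : ℝ => Complex.exp (-Complex.I * (n * (π / a * x) : ℝ)) * F x)
      (by linarith)]
    · rw [e, ← intervalIntegral.integral_add_adjacent_intervals (b := 0)
        (Continuous.intervalIntegrable (by fun_prop) _ _)
        (Continuous.intervalIntegrable (by fun_prop) _ _)]
      have e2 : ∫ x in (-a)..0, Complex.exp (-Complex.I * (n * (π / a * x) : ℝ)) * F x =
        ∫ x in (0:ℝ)..a, Complex.exp (-Complex.I * (n * (π / a * (-x)) : ℝ)) * F (-x) := by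
        rw [intervalIntegral.integral_comp_neg (fun x : ℝ => Complex.exp (-Complex.I * (n * (π / a * x) : ℝ)) * F x)]
        simp
      rw [e2, ← intervalIntegral.integral_add
        (Continuous.intervalIntegrable (by fun_prop) _ _)
        (Continuous.intervalIntegrable (by fun_prop) _ _), ← intervalIntegral.integral_ofReal,
        ← intervalIntegral.integral_const_mul]
      refine intervalIntegral.integral_congr (fun x hx => ?_)
      rw [uIcc_of_le ha.le] at hx
      have hF1 : F x = f x := by simp [F, hx.1, h0]
      have hF2 : F (-x) = - f x := by simp [F, hx.1, h0]
      rw [hF1, hF2]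
      have e3 : (((n * (π / a * (-x)) : ℝ)) : ℂ) = -((n * (π / a * x) : ℝ) : ℂ) := by
        push_cast; ring
      rw [e3]
      push_cast
      have e4 : ∀ w : ℂ, Complex.exp (-Complex.I * -w) = Complex.cos w + Complex.sin w * Complex.I := by
        intro w; rw [← Complex.exp_mul_I]; congr 1; ring
      have e5 : ∀ w : ℂ, Complex.exp (-Complex.I * w) = Complex.cos w - Complex.sin w * Complex.I := by
        intro w
        have := e4 (-w)
        rw [neg_neg] at this
        rw [this, Complex.cos_neg, Complex.sin_neg]; ring
      rw [e4, e5]; ring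
    · intro x hx
      simp only []
      rw [AddCircle.liftIco_coe_apply ⟨hx.1.le, hx.2⟩, fourier_coe_apply, smul_eq_mul]
      congr 2
      have ha' : (a:ℂ) ≠ 0 := by exact_mod_cast ha.ne'
      push_cast
      field_simp
  have hcn : ∀ n : ℕ, fourierCoeff (AddCircle.liftIco (2*a) (-a) F) (n:ℤ) = -Complex.I / 2 * β n := by
    intro n
    rw [hcoef]
    have ha' : (a:ℂ) ≠ 0 := by exact_mod_cast ha.ne'
    have := hc n
    simp only [Int.cast_natCast, this, Complex.real_smul]
    push_cast
    field_simp
  have hcn' : ∀ n : ℕ, fourierCoeff (AddCircle.liftIco (2*a) (-a) F) (-(n:ℤ)) = Complex.I / 2 * β n := by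
    intro n
    rw [hcoef]
    have ha' : (a:ℂ) ≠ 0 := by exact_mod_cast ha.ne'
    have := hc n
    simp only [Int.cast_natCast, Int.cast_neg, neg_mul, Real.sin_neg, mul_neg,
      intervalIntegral.integral_neg, this, Complex.real_smul]
    push_cast
    field_simp
  have hβc : Summable (fun n => (β n : ℂ)) := by
    refine Summable.of_norm ?_
    simpa using hβ
  have hsum : Summable (fourierCoeff (AddCircle.liftIco (2*a) (-a) F)) := by
    refine Summable.of_nat_of_neg ?_ ?_
    · simp_rw [hcn]; exact hβc.mul_left _
    · simp_rw [hcn']; exact hβc.mul_left _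
  have H := has_pointwise_sum_fourier_series_of_summable
    (f := (⟨AddCircle.liftIco (2*a) (-a) F, hL⟩ : C(AddCircle (2*a), ℂ))) hsum (y : AddCircle (2*a))
  have H2 := H.nat_add_neg
  have hb0 : β 0 = 0 := by
    have := hc 0
    simp at this
    rcases this with h | h
    · exact absurd h ha.ne'
    · exact h
  have hc0 := hcn 0
  simp only [Nat.cast_zero, hb0, Complex.ofReal_zero, mul_zero] at hc0
  simp only [ContinuousMap.coe_mk, hcn, hcn', hc0, zero_smul, add_zero] at H2
  rw [AddCircle.liftIco_coe_apply ⟨by linarith, by linarith⟩] at H2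
  have hF1 : F y = f y := by simp [F, hy0, h0]
  rw [hF1] at H2
  rw [← Complex.hasSum_ofReal]
  convert H2 using 2 with n
  rw [fourier_coe_apply, fourier_coe_apply, smul_eq_mul, smul_eq_mul]
  have ha' : (a:ℂ) ≠ 0 := by exact_mod_cast ha.ne'
  have e1 : 2 * (π:ℂ) * Complex.I * ((n:ℤ):ℂ) * y / ((2 * a : ℝ):ℂ) =
      (n * (π / a * y) : ℂ) * Complex.I := by push_cast; field_simp
  have e2 : 2 * (π:ℂ) * Complex.I * ((-(n:ℤ) : ℤ):ℂ) * y / ((2 * a : ℝ):ℂ) =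
      -(n * (π / a * y) : ℂ) * Complex.I := by push_cast; field_simp
  rw [e1, e2, Complex.exp_mul_I, Complex.exp_mul_I, Complex.cos_neg, Complex.sin_neg]
  push_cast
  linear_combination ((β n : ℂ) * Complex.sin (n * (π / a * y))) * Complex.I_sq


lemma green (a : ℝ) (ha : 0 < a) (g g' r : ℝ → ℝ) (hg : ∀ y, HasDerivAt g (g' y) y)
    (hg' : ∀ y, HasDerivAt g' (-(π/a)^2 * g y + r y) y) (hr : Continuous r)
    (g0 : g 0 = 0) (ga : g a = 0) (n : ℕ) :
    ((n:ℝ)^2 - 1) * (π/a)^2 * (∫ y in (0:ℝ)..a, g y * Real.sin (n * (π / a * y))) =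
      -∫ y in (0:ℝ)..a, r y * Real.sin (n * (π / a * y)) := by
  have hgc : Continuous g := continuous_iff_continuousAt.2 fun y => (hg y).continuousAt
  have hn : Real.sin (n * (π / a * a)) = 0 := by
    rw [div_mul_cancel₀ _ ha.ne', Real.sin_nat_mul_pi]
  have H := intervalIntegral.integral_eq_sub_of_hasDerivAt (a := 0) (b := a)
    (f := fun y => g' y * Real.sin (n * (π / a * y)) - g y * (Real.cos (n * (π / a * y)) * (n * (π/a))))
    (f' := fun y => ((n:ℝ)^2 - 1) * (π/a)^2 * (g y * Real.sin (n * (π / a * y))) +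
      r y * Real.sin (n * (π / a * y)))
    (fun y _ => by
      have hl : HasDerivAt (fun y : ℝ => n * (π / a * y)) (n * (π / a)) y := by
        simpa using ((hasDerivAt_id y).const_mul (π/a)).const_mul (n:ℝ)
      have := ((hg' y).mul hl.sin).sub ((hg y).mul (hl.cos.mul_const (n * (π/a))))
      refine this.congr_deriv ?_
      ring)
    (Continuous.intervalIntegrable (by fun_prop) _ _)
  rw [intervalIntegral.integral_add (Continuous.intervalIntegrable (by fun_prop) _ _)
    (Continuous.intervalIntegrable (by fun_prop) _ _), intervalIntegral.integral_const_mul] at H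
  simp only [g0, ga, hn, mul_zero, Real.sin_zero, zero_mul, sub_zero] at H
  linarith

noncomputable def gM (c a : ℝ) : ℝ := 2 / (c^2 + 4 * (π/a)^2)
noncomputable def gK (c a : ℝ) : ℝ := 2 * (π/a) * gM c a / c * (π/a) * ((1 - Real.exp (-c*a)) / a)
noncomputable def gf (c a y : ℝ) : ℝ :=
  2 * (π/a) * gM c a / c * Real.cos (π/a*y) * (1 - Real.exp (-c*y) - (1 - Real.exp (-c*a)) / a * y)
    + Real.sin (π/a*y) * (6 * gM c a / (c*a) - gM c a * Real.exp (-c*y))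
noncomputable def gf' (c a y : ℝ) : ℝ :=
  2 * (π/a) * gM c a / c * (-Real.sin (π/a*y) * (π/a)) * (1 - Real.exp (-c*y) - (1 - Real.exp (-c*a)) / a * y)
    + 2 * (π/a) * gM c a / c * Real.cos (π/a*y) * (c * Real.exp (-c*y) - (1 - Real.exp (-c*a)) / a)
    + Real.cos (π/a*y) * (π/a) * (6 * gM c a / (c*a) - gM c a * Real.exp (-c*y))
    + Real.sin (π/a*y) * (c * gM c a * Real.exp (-c*y))

lemma gM_pos (c a : ℝ) (hc : 0 < c) : 0 < gM c a := by unfold gM; positivity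

lemma gf_deriv (c a y : ℝ) : HasDerivAt (gf c a) (gf' c a y) y := by
  have h1 : HasDerivAt (fun y : ℝ => π/a*y) (π/a) y := by
    simpa using (hasDerivAt_id y).const_mul (π/a)
  have h2 : HasDerivAt (fun y : ℝ => -c*y) (-c) y := by
    simpa using (hasDerivAt_id y).const_mul (-c)
  have h3 : HasDerivAt (fun y : ℝ => (1 - Real.exp (-c*a)) / a * y) ((1 - Real.exp (-c*a)) / a) y := by
    simpa using (hasDerivAt_id y).const_mul ((1 - Real.exp (-c*a)) / a)
  have := ((h1.cos.const_mul (2 * (π/a) * gM c a / c)).mul ((h2.exp.const_sub 1).sub h3)).add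
    (h1.sin.mul ((h2.exp.const_mul (gM c a)).const_sub (6 * gM c a / (c*a))))
  refine this.congr_deriv ?_
  simp only [gf', Pi.sub_apply]
  ring

lemma gf'_deriv (c a y : ℝ) (hc : 0 < c) : HasDerivAt (gf' c a)
    (-(π/a)^2 * gf c a y + (2 * gK c a * Real.sin (π/a*y) - 2 * (Real.sin (π/a*y) * Real.exp (-c*y)))) y := by
  have h1 : HasDerivAt (fun y : ℝ => π/a*y) (π/a) y := by
    simpa using (hasDerivAt_id y).const_mul (π/a)
  have h2 : HasDerivAt (fun y : ℝ => -c*y) (-c) y := by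
    simpa using (hasDerivAt_id y).const_mul (-c)
  have h3 : HasDerivAt (fun y : ℝ => (1 - Real.exp (-c*a)) / a * y) ((1 - Real.exp (-c*a)) / a) y := by
    simpa using (hasDerivAt_id y).const_mul ((1 - Real.exp (-c*a)) / a)
  have hk := (h2.exp.const_sub 1).sub h3
  have hE := ((h2.exp.const_mul (gM c a)).const_sub (6 * gM c a / (c*a)))
  have hD : HasDerivAt (fun y => c * Real.exp (-c*y) - (1 - Real.exp (-c*a)) / a) _ y :=
    (h2.exp.const_mul c).sub_const ((1 - Real.exp (-c*a)) / a)
  have := (((((h1.sin.neg.mul_const (π/a)).const_mul (2 * (π/a) * gM c a / c)).mul hk).add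
    ((h1.cos.const_mul (2 * (π/a) * gM c a / c)).mul hD)).add
    ((h1.cos.mul_const (π/a)).mul hE)).add (h1.sin.mul (h2.exp.const_mul (c * gM c a)))
  refine this.congr_deriv ?_
  have hM : gM c a * (c^2 + 4 * (π/a)^2) = 2 := by
    unfold gM; rw [div_mul_cancel₀]; positivity
  simp only [gf, gK, Pi.sub_apply, Pi.neg_apply]
  generalize gM c a = M at *
  generalize π/a = w at *
  generalize (1 - Real.exp (-c*a)) / a = q at *
  have : 2 * (Real.sin (w*y) * Real.exp (-c*y)) = (M * (c^2 + 4 * w^2)) * (Real.sin (w*y) * Real.exp (-c*y)) := by rw [hM]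
  rw [this]
  field_simp
  ring

lemma gf_zero (c a : ℝ) : gf c a 0 = 0 := by simp [gf]
lemma gf_a (c a : ℝ) (ha : 0 < a) : gf c a a = 0 := by
  have : π / a * a = π := by field_simp
  have h2 : (1 - Real.exp (-c*a)) / a * a = 1 - Real.exp (-c*a) := by field_simp
  simp [gf, this]
  right; field_simp; simp

lemma gf_nonneg (c a y : ℝ) (hc : 0 < c) (ha : 0 < a) (hy0 : 0 ≤ y) (hya : y ≤ a) :
    0 ≤ gf c a y := by
  have hM := gM_pos c a hc
  set θ := π/a*y with hθ
  have hθ0 : 0 ≤ θ := by positivity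
  have hθπ : θ ≤ π := by
    rw [hθ, div_mul_eq_mul_div, div_le_iff₀ ha]; gcongr
  have hs : 0 ≤ Real.sin θ := Real.sin_nonneg_of_nonneg_of_le_pi hθ0 hθπ
  set e := Real.exp (-c*y) with he
  have he0 : 0 < e := Real.exp_pos _
  have hee : e * (1 + c*y) ≤ 1 := by
    have h1 : c*y + 1 ≤ Real.exp (c*y) := Real.add_one_le_exp _
    have h2 : e * Real.exp (c*y) = 1 := by rw [he, ← Real.exp_add]; simp
    nlinarith
  set k := 1 - e - (1 - Real.exp (-c*a)) / a * y with hk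
  suffices h : 0 ≤ 2 * (π/a) / c * Real.cos θ * k + Real.sin θ * (6 / (c*a) - e) by
    have : gf c a y = gM c a * (2 * (π/a) / c * Real.cos θ * k + Real.sin θ * (6 / (c*a) - e)) := by
      simp only [gf, ← hθ, ← he, ← hk]; ring
    rw [this]; positivity
  have hea : Real.exp (-c*a) ≤ e := Real.exp_le_exp.2 (by nlinarith)
  have hea0 := Real.exp_pos (-c*a)
  rcases le_total y (a/2) with h | h
  · have hθ2 : θ ≤ π/2 := by
      rw [hθ, div_mul_eq_mul_div, div_le_iff₀ ha]; nlinarith [Real.pi_pos]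
    have hcos : 0 ≤ Real.cos θ := Real.cos_nonneg_of_neg_pi_div_two_le_of_le (by linarith) hθ2
    have hcos2 : 1 - 2 * (y/a) ≤ Real.cos θ := by
      have := Real.one_sub_mul_le_cos hθ0 hθ2
      have e1 : 2 / π * θ = 2 * (y/a) := by rw [hθ]; field_simp
      rwa [e1] at this
    have htan : θ * Real.cos θ ≤ Real.sin θ := by
      rcases hθ2.lt_or_eq with hlt | heq
      · have := Real.le_tan hθ0 hlt
        have hp : 0 < Real.cos θ := Real.cos_pos_of_mem_Ioo ⟨by linarith, hlt⟩
        rwa [Real.tan_eq_sin_div_cos, le_div_iff₀ hp] at this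
      · rw [heq]; simp
    have hsl : Real.sin θ ≤ θ := Real.sin_le hθ0
    have hkl : c * y * e - y / a ≤ k := by
      have : (1 - Real.exp (-c*a)) / a * y ≤ y / a := by
        rw [div_mul_eq_mul_div]; gcongr; nlinarith
      nlinarith
    have s1 : 2 * (π/a) / c * Real.cos θ * (c * y * e - y / a) ≤ 2 * (π/a) / c * Real.cos θ * k := by
      gcongr
    have s2 : 2 * (π/a) / c * Real.cos θ * (c * y * e - y / a) =
        2 * e * (θ * Real.cos θ) - 2 / (c*a) * (θ * Real.cos θ) := by
      rw [hθ]; field_simp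
    have s3 : 2 / (c*a) * (θ * Real.cos θ) ≤ 2 / (c*a) * Real.sin θ := by gcongr
    have s4 : 2 * e * (Real.sin θ * (1 - 2 * (y/a))) ≤ 2 * e * (θ * Real.cos θ) := by
      have : Real.sin θ * (1 - 2 * (y/a)) ≤ Real.sin θ * Real.cos θ := by gcongr
      have : Real.sin θ * Real.cos θ ≤ θ * Real.cos θ := by gcongr
      have : Real.sin θ * (1 - 2 * (y/a)) ≤ θ * Real.cos θ := by linarith
      gcongr
    have s5 : e * (y / a) ≤ 1 / (c * a) := by
      rw [mul_div_assoc', div_le_div_iff₀ ha (by positivity)]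
      nlinarith
    have s6 : Real.sin θ * (e * (y/a)) ≤ Real.sin θ * (1 / (c*a)) := by gcongr
    have s7 : (2:ℝ) / (c*a) = 2 * (1/(c*a)) := by ring
    have s8 : (6:ℝ) / (c*a) = 6 * (1/(c*a)) := by ring
    rw [s8]; rw [s7] at s2 s3
    nlinarith [mul_nonneg hs he0.le]
  · have hθ2 : π/2 ≤ θ := by
      rw [hθ, div_mul_eq_mul_div, le_div_iff₀ ha]; nlinarith [Real.pi_pos]
    have hcos : Real.cos θ ≤ 0 := Real.cos_nonpos_of_pi_div_two_le_of_le hθ2 (by linarith)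
    have hcos1 := Real.neg_one_le_cos θ
    have hkl : k ≤ 1 - y/a := by
      have : Real.exp (-c*a) * (y/a) ≤ e := by
        have : y/a ≤ 1 := by rw [div_le_one ha]; exact hya
        nlinarith
      have e2 : (1 - Real.exp (-c*a)) / a * y = y/a - Real.exp (-c*a) * (y/a) := by ring
      rw [hk, e2]; linarith
    have hsin : 2 * (1 - y/a) ≤ Real.sin θ := by
      have := Real.mul_le_sin (x := π - θ) (by linarith) (by linarith)
      rw [Real.sin_pi_sub] at this
      have e1 : 2 / π * (π - θ) = 2 * (1 - y/a) := by rw [hθ]; field_simp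
      rwa [e1] at this
    have hya' : y/a ≤ 1 := by rw [div_le_one ha]; exact hya
    have s1 : -(Real.sin θ / 2) ≤ Real.cos θ * k := by nlinarith
    have s2 : 2 * (π/a) / c * (-(Real.sin θ / 2)) ≤ 2 * (π/a) / c * (Real.cos θ * k) := by
      gcongr
    have s3 : e ≤ 2 / (c*a) := by
      rw [le_div_iff₀ (by positivity)]; nlinarith [mul_pos he0 hc]
    have s4 : 2 * (π/a) / c * (-(Real.sin θ / 2)) = - (Real.sin θ * (π / (c * a))) := by
      field_simp
    have s5 : π / (c*a) ≤ 4 / (c*a) := by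
      gcongr; exact Real.pi_le_four
    have s6 : Real.sin θ * (π / (c*a)) ≤ Real.sin θ * (6 / (c*a) - e) := by
      refine mul_le_mul_of_nonneg_left ?_ hs
      have : (6:ℝ) / (c*a) = 4 / (c*a) + 2/(c*a) := by ring
      linarith
    nlinarith

lemma gf_le (c a y : ℝ) (hc : 0 < c) (ha : 0 < a) (hy0 : 0 < y) (hya : y < a) :
    gf c a y ≤ (10 / c^2 + 16 / c^3) * min 1 (1/y) * Real.sin (π/a*y) := by
  have hM := gM_pos c a hc
  have hM1 : gM c a ≤ 2 / c^2 := by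
    unfold gM; gcongr; nlinarith [sq_nonneg (π/a)]
  have hM2 : gM c a / a ≤ 1 / c := by
    unfold gM
    have : 2 * c * (π/a) * 2 ≤ c^2 + 4 * (π/a)^2 := by nlinarith [sq_nonneg (c - 2*(π/a))]
    have h2 : 2 * c / a ≤ c^2 + 4 * (π/a)^2 := by
      refine le_trans ?_ this
      have : 2 * c * (π/a) * 2 = 2 * c / a * (2 * π) := by ring
      rw [this]
      refine le_mul_of_one_le_right (by positivity) (by linarith [Real.pi_gt_three])
    rw [div_div, div_le_div_iff₀ (by positivity) hc]
    rw [div_le_iff₀ ha] at h2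
    linarith
  set θ := π/a*y with hθ
  have hθ0 : 0 ≤ θ := by positivity
  have hθπ : θ ≤ π := by
    rw [hθ, div_mul_eq_mul_div, div_le_iff₀ ha]; gcongr
  have hs : 0 ≤ Real.sin θ := Real.sin_nonneg_of_nonneg_of_le_pi hθ0 hθπ
  set e := Real.exp (-c*y) with he
  have he0 : 0 < e := Real.exp_pos _
  have hea1 : Real.exp (-c*a) ≤ 1 := Real.exp_le_one_iff.2 (by nlinarith)
  have he1 : 1 - c * y ≤ e := by
    have := Real.add_one_le_exp (-c*y); linarith
  set k := 1 - e - (1 - Real.exp (-c*a)) / a * y with hk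
  have hq : 0 ≤ (1 - Real.exp (-c*a)) / a * y := by
    have : 0 ≤ 1 - Real.exp (-c*a) := by linarith
    positivity
  have hk1 : k ≤ 1 := by linarith
  have hk2 : k ≤ c * y := by linarith
  have hya' : y/a ≤ 1 := by rw [div_le_one ha]; exact hya.le
  have hk0 : 0 ≤ k := by
    have := convexOn_exp.2 (mem_univ (0:ℝ)) (mem_univ (-c*a))
      (show (0:ℝ) ≤ 1 - y/a by linarith) (show (0:ℝ) ≤ y/a by positivity) (by ring)
    have e1 : (1 - y/a) • (0:ℝ) + (y/a) • (-c*a) = -c*y := by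
      simp only [smul_eq_mul]; field_simp; ring
    rw [e1, ← he] at this
    simp only [smul_eq_mul, Real.exp_zero] at this
    have e2 : (1 - Real.exp (-c*a)) / a * y = y/a - (y/a) * Real.exp (-c*a) := by ring
    rw [hk, e2]; linarith
  have hg : gf c a y = 2 * gM c a / c * ((π/a) * Real.cos θ * k) +
      Real.sin θ * (6 * gM c a / (c*a)) - Real.sin θ * gM c a * e := by
    simp only [gf, ← hθ, ← he, ← hk]; ring
  have hcosk : (π/a) * Real.cos θ * k ≤ Real.sin θ * (k / y) := by
    rcases le_total y (a/2) with h | h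
    · have hθ2 : θ ≤ π/2 := by
        rw [hθ, div_mul_eq_mul_div, div_le_iff₀ ha]; nlinarith [Real.pi_pos]
      have htan : θ * Real.cos θ ≤ Real.sin θ := by
        rcases hθ2.lt_or_eq with hlt | heq
        · have := Real.le_tan hθ0 hlt
          have hp : 0 < Real.cos θ := Real.cos_pos_of_mem_Ioo ⟨by linarith, hlt⟩
          rwa [Real.tan_eq_sin_div_cos, le_div_iff₀ hp] at this
        · rw [heq]; simp
      have e1 : (π/a) * Real.cos θ * k = θ * Real.cos θ * (k/y) := by rw [hθ]; field_simp
      rw [e1]; gcongr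
    · have hθ2 : π/2 ≤ θ := by
        rw [hθ, div_mul_eq_mul_div, le_div_iff₀ ha]; nlinarith [Real.pi_pos]
      have hcos : Real.cos θ ≤ 0 := Real.cos_nonpos_of_pi_div_two_le_of_le hθ2 (by linarith)
      have h1 : (π/a) * Real.cos θ * k ≤ 0 := by
        have : 0 ≤ (π/a) * k := by positivity
        nlinarith
      have h2 : 0 ≤ Real.sin θ * (k/y) := by positivity
      linarith
  have hmain : gf c a y ≤ Real.sin θ * (2 * gM c a / c * (k/y) + 6 * gM c a / (c*a)) := by
    rw [hg]
    have : 2 * gM c a / c * ((π/a) * Real.cos θ * k) ≤ 2 * gM c a / c * (Real.sin θ * (k / y)) := by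
      gcongr
    have : 0 ≤ Real.sin θ * gM c a * e := by positivity
    linarith
  have hb1 : 2 * gM c a / c * (k/y) + 6 * gM c a / (c*a) ≤ 10 / c^2 := by
    have h1 : k / y ≤ c := by rw [div_le_iff₀ hy0]; exact hk2
    have h2 : 2 * gM c a / c * (k/y) ≤ 2 * (2/c^2) / c * c := by gcongr
    have h3 : 6 * gM c a / (c*a) = 6 / c * (gM c a / a) := by field_simp
    have h4 : 6 / c * (gM c a / a) ≤ 6 / c * (1 / c) := by gcongr
    have h5 : 2 * (2/c^2) / c * c + 6 / c * (1 / c) = 10 / c^2 := by field_simp; norm_num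
    linarith
  have hb2 : 2 * gM c a / c * (k/y) + 6 * gM c a / (c*a) ≤ 16 / c^3 * (1/y) := by
    have h2 : 2 * gM c a / c * (k/y) ≤ 2 * (2/c^2) / c * (1/y) := by gcongr
    have h3 : 6 * gM c a / (c*a) ≤ 6 * (2/c^2) / (c*y) := by gcongr
    have h5 : 2 * (2/c^2) / c * (1/y) + 6 * (2/c^2) / (c*y) = 16 / c^3 * (1/y) := by
      field_simp; norm_num
    linarith
  refine hmain.trans ?_
  rw [mul_comm]
  refine mul_le_mul_of_nonneg_right ?_ hs
  rcases le_total 1 (1/y) with h | h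
  · rw [min_eq_left h]
    have : 0 ≤ 16 / c^3 := by positivity
    linarith
  · rw [min_eq_right h]
    have : 0 ≤ 10 / c^2 * (1/y) := by positivity
    linarith

lemma gK_le (c a : ℝ) (hc : 0 < c) (ha : 0 < a) : gK c a ≤ 4 * π^2 / c^3 / a^3 := by
  have hM := gM_pos c a hc
  have hM1 : gM c a ≤ 2 / c^2 := by
    unfold gM; gcongr; nlinarith [sq_nonneg (π/a)]
  have h1 : (1 - Real.exp (-c*a)) ≤ 1 := by linarith [Real.exp_pos (-c*a)]
  unfold gK
  have : 2 * (π/a) * gM c a / c * (π/a) * ((1 - Real.exp (-c*a)) / a) ≤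
    2 * (π/a) * (2/c^2) / c * (π/a) * (1 / a) := by
    have h0 : 0 ≤ (1 - Real.exp (-c*a)) / a := by
      have : Real.exp (-c*a) ≤ 1 := Real.exp_le_one_iff.2 (by nlinarith)
      exact div_nonneg (by linarith) ha.le
    gcongr
  refine this.trans (le_of_eq ?_)
  field_simp
  norm_num

/-- Sine coefficients of `sin (π y / a) * exp (-c y)` (unnormalised). -/
noncomputable def cB (c a : ℝ) (n : ℕ) : ℝ :=
  ∫ y in (0:ℝ)..a, Real.sin (π/a*y) * Real.exp (-c*y) * Real.sin (n * (π / a * y))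
noncomputable def cμ (a : ℝ) (n : ℕ) : ℝ := ((n:ℝ)^2 - 1) * (π/a)^2 / 2
noncomputable def cβ (c a : ℝ) (n : ℕ) : ℝ :=
  2 / a * ∫ y in (0:ℝ)..a, gf c a y * Real.sin (n * (π / a * y))

lemma cB_le (c a : ℝ) (hc : 0 < c) (ha : 0 < a) (n : ℕ) : |cB c a n| ≤ a := by
  have := intervalIntegral.norm_integral_le_of_norm_le_const (a := 0) (b := a) (C := 1)
    (f := fun y => Real.sin (π/a*y) * Real.exp (-c*y) * Real.sin (n * (π / a * y))) (fun y hy => by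
      rw [uIoc_of_le ha.le] at hy
      have h1 := Real.abs_sin_le_one (π/a*y)
      have h2 := Real.abs_sin_le_one (n * (π / a * y))
      have h3 : Real.exp (-c*y) ≤ 1 := Real.exp_le_one_iff.2 (by nlinarith [hy.1])
      rw [norm_mul, norm_mul, Real.norm_eq_abs, Real.norm_eq_abs, Real.norm_eq_abs, Real.abs_exp]
      exact mul_le_one₀ (mul_le_one₀ h1 (Real.exp_pos _).le h3) (abs_nonneg _) h2)
  rw [one_mul, sub_zero, abs_of_pos ha] at this
  exact this

lemma sin_orth (a : ℝ) (ha : 0 < a) (n : ℕ) :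
    ∫ y in (0:ℝ)..a, Real.sin (π/a*y) * Real.sin (n * (π / a * y)) = if n = 1 then a/2 else 0 := by
  have hpa : π / a ≠ 0 := by positivity
  split_ifs with h
  · subst h
    have e : ∀ y : ℝ, Real.sin (π/a*y) * Real.sin ((1:ℕ) * (π / a * y)) = Real.sin (π/a*y)^2 := by
      intro y; simp; ring
    simp_rw [e]
    rw [intervalIntegral.integral_comp_mul_left (fun z => Real.sin z ^ 2) hpa, integral_sin_sq]
    have : π / a * a = π := by field_simp
    rw [this]
    simp
    field_simp
  · have h1 : ∀ y : ℝ, HasDerivAt (fun y : ℝ => π/a*y) (π/a) y := fun y => by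
      simpa using (hasDerivAt_id y).const_mul (π/a)
    have := green a ha (fun y => Real.sin (π/a*y)) (fun y => Real.cos (π/a*y) * (π/a)) (fun _ => 0)
      (fun y => (h1 y).sin) (fun y => by
        refine ((h1 y).cos.mul_const (π/a)).congr_deriv ?_
        ring) continuous_const (by simp) (by
          have : π / a * a = π := by field_simp
          simp [this]) n
    simp only [zero_mul, intervalIntegral.integral_zero, neg_zero] at this
    have hn : ((n:ℝ)^2 - 1) ≠ 0 := by
      intro h0
      have h2 : ((n:ℝ) - 1) * ((n:ℝ) + 1) = 0 := by linarith
      rcases mul_eq_zero.1 h2 with h3 | h3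
      · exact h (by exact_mod_cast sub_eq_zero.1 h3)
      · have : (0:ℝ) ≤ n := Nat.cast_nonneg n
        linarith
    rcases mul_eq_zero.1 this with h2 | h2
    · exact absurd h2 (by positivity)
    · exact h2

lemma coef_rel (c a : ℝ) (hc : 0 < c) (ha : 0 < a) (n : ℕ) :
    2 / a * cB c a n = cμ a n * cβ c a n + if n = 1 then gK c a else 0 := by
  have := green a ha (gf c a) (gf' c a) _ (gf_deriv c a) (fun y => gf'_deriv c a y hc)
    (by fun_prop) (gf_zero c a) (gf_a c a ha) n
  have e : (∫ y in (0:ℝ)..a, (2 * gK c a * Real.sin (π/a*y) -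
      2 * (Real.sin (π/a*y) * Real.exp (-c*y))) * Real.sin (n * (π / a * y))) =
      2 * gK c a * (if n = 1 then a/2 else 0) - 2 * cB c a n := by
    rw [← sin_orth a ha, cB, ← intervalIntegral.integral_const_mul,
      ← intervalIntegral.integral_const_mul, ← intervalIntegral.integral_sub
        (Continuous.intervalIntegrable (by fun_prop) _ _)
        (Continuous.intervalIntegrable (by fun_prop) _ _)]
    refine intervalIntegral.integral_congr (fun y _ => ?_)
    ring
  rw [e] at this
  unfold cβ cμ
  split_ifs at this ⊢ with h
  · field_simp at this ⊢
    linarith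
  · field_simp at this ⊢
    linarith

lemma cβ_summable (c a : ℝ) (hc : 0 < c) (ha : 0 < a) : Summable (fun n => |cβ c a n|) := by
  have hs : Summable (fun n : ℕ => 8 / (π/a)^2 * (1 / (n:ℝ)^2)) :=
    (Real.summable_one_div_nat_pow.2 (by norm_num)).mul_left _
  refine Summable.of_norm_bounded_eventually_nat hs ?_
  filter_upwards [eventually_ge_atTop 2] with n hn
  have h := coef_rel c a hc ha n
  rw [if_neg (by omega), add_zero] at h
  have hn' : (2:ℝ) ≤ n := by exact_mod_cast hn
  have hw : 0 < (π/a)^2 := by positivity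
  have hμ : (n:ℝ)^2 / 4 * (π/a)^2 ≤ cμ a n := by
    unfold cμ
    have : (n:ℝ)^2 / 2 ≤ (n:ℝ)^2 - 1 := by nlinarith
    nlinarith
  have hpos : 0 < (n:ℝ)^2 / 4 * (π/a)^2 := by positivity
  have h2 : cμ a n * |cβ c a n| ≤ 2 := by
    have : |cμ a n * cβ c a n| ≤ 2 := by
      rw [← h, abs_mul, abs_of_pos (by positivity)]
      have := cB_le c a hc ha n
      calc 2 / a * |cB c a n| ≤ 2 / a * a := by gcongr
        _ = 2 := by field_simp
    rwa [abs_mul, abs_of_pos (by linarith)] at this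
  rw [norm_abs_eq_norm, Real.norm_eq_abs]
  have h3 : (n:ℝ)^2 / 4 * (π/a)^2 * |cβ c a n| ≤ 2 := by
    refine le_trans ?_ h2
    gcongr
  have : 8 / (π/a)^2 * (1 / (n:ℝ)^2) = 2 / ((n:ℝ)^2 / 4 * (π/a)^2) := by
    field_simp; norm_num
  rw [this, le_div_iff₀ hpos]
  linarith

lemma gf_series (c a : ℝ) (hc : 0 < c) (ha : 0 < a) (y : ℝ) (hy0 : 0 ≤ y) (hya : y < a) :
    HasSum (fun n : ℕ => cβ c a (n+1) * Real.sin (((n:ℝ)+1) * (π / a * y))) (gf c a y) := by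
  have hcont : Continuous (gf c a) :=
    continuous_iff_continuousAt.2 fun y => (gf_deriv c a y).continuousAt
  have := sine_series a ha (gf c a) hcont (gf_zero c a) (gf_a c a ha) (cβ c a)
    (fun n => by unfold cβ; field_simp) (cβ_summable c a hc ha) y hy0 hya
  rw [← hasSum_nat_add_iff' 1] at this
  simpa using this

lemma inner_eq (c a : ℝ) (hc : 0 < c) (ha : 0 < a) (x : ℝ) (s : ℝ) (hs : 0 < s) :
    (∫ y in (0:ℝ)..a, ptaboo a s x y * Real.exp (-c * y)) =
      ∑' n : ℕ, (2 / a * cB c a (n+1)) * Real.exp (-cμ a (n+1) * s) *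
        Real.sin (((n:ℝ)+1) * (π / a * x)) / Real.sin (π / a * x) := by
  let A : ℕ → ℝ := fun n => 2 / a * Real.exp (-cμ a (n+1) * s) *
        Real.sin (((n:ℝ)+1) * (π / a * x)) / Real.sin (π / a * x)
  let ψ : ℕ → ℝ → ℝ := fun n y =>
    Real.sin (π/a*y) * Real.exp (-c*y) * Real.sin ((n+1 : ℕ) * (π / a * y))
  have hψc : ∀ n, Continuous (ψ n) := fun n => by simp only [ψ]; fun_prop
  have hA : Summable (fun n => |A n|) := by
    have hg : Summable (fun n : ℕ => 2 / a * |Real.sin (π / a * x)|⁻¹ * Real.exp (n * (-((π/a)^2/2 * s)))) := by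
      refine (Real.summable_exp_nat_mul_iff.2 ?_).mul_left _
      have : 0 < (π/a)^2/2 * s := by positivity
      linarith
    refine Summable.of_norm_bounded hg (fun n => ?_)
    rw [norm_abs_eq_norm, Real.norm_eq_abs]
    simp only [A]
    rw [abs_div, abs_mul, abs_mul, Real.abs_exp, abs_of_pos (show 0 < 2/a by positivity), div_eq_mul_inv]
    have h1 := Real.abs_sin_le_one (((n:ℝ)+1) * (π / a * x))
    have h2 : Real.exp (-cμ a (n+1) * s) ≤ Real.exp (n * (-((π/a)^2/2 * s))) := by
      rw [Real.exp_le_exp]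
      unfold cμ
      push_cast
      have h3 : 0 < (π/a)^2/2 * s := by positivity
      have h4 : (n:ℝ) ≤ ((n:ℝ)+1)^2 - 1 := by nlinarith [Nat.cast_nonneg (α := ℝ) n]
      nlinarith
    calc 2 / a * Real.exp (-cμ a (n+1) * s) * |Real.sin (((n:ℝ)+1) * (π / a * x))| * |Real.sin (π / a * x)|⁻¹
        ≤ 2 / a * Real.exp (n * (-((π/a)^2/2 * s))) * 1 * |Real.sin (π / a * x)|⁻¹ := by gcongr
      _ = _ := by ring
  have hFint : ∀ n, Integrable (fun y => A n * ψ n y) (volume.restrict (Ioc 0 a)) := fun n =>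
    (((hψc n).const_mul (A n)).integrableOn_Ioc)
  have hsum : Summable (fun n => ∫ y in Ioc 0 a, ‖A n * ψ n y‖) := by
    refine Summable.of_nonneg_of_le (fun n => integral_nonneg fun y => norm_nonneg _) (fun n => ?_)
      (hA.mul_right a)
    rw [← intervalIntegral.integral_of_le ha.le]
    have := intervalIntegral.norm_integral_le_of_norm_le_const (a := 0) (b := a) (C := |A n|)
      (f := fun y => ‖A n * ψ n y‖) (fun y hy => by
        rw [uIoc_of_le ha.le] at hy
        have h1 := Real.abs_sin_le_one (π/a*y)
        have h2 := Real.abs_sin_le_one ((n+1 : ℕ) * (π / a * y))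
        have h3 : Real.exp (-c*y) ≤ 1 := Real.exp_le_one_iff.2 (by nlinarith [hy.1])
        simp only [ψ]
        rw [norm_norm, norm_mul, norm_mul, norm_mul, Real.norm_eq_abs, Real.norm_eq_abs,
          Real.norm_eq_abs, Real.norm_eq_abs, Real.abs_exp]
        refine mul_le_of_le_one_right (abs_nonneg _) ?_
        exact mul_le_one₀ (mul_le_one₀ h1 (Real.exp_pos _).le h3) (abs_nonneg _) h2)
    rw [sub_zero, abs_of_pos ha] at this
    exact (le_abs_self _).trans this
  have H := (hasSum_integral_of_summable_integral_norm hFint hsum).tsum_eq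
  have e1 : (∫ y in (0:ℝ)..a, ptaboo a s x y * Real.exp (-c * y)) =
      ∫ y in Ioc 0 a, ∑' n, A n * ψ n y := by
    rw [intervalIntegral.integral_of_le ha.le]
    congr 1
    funext y
    unfold ptaboo pker
    have : ∀ n : ℕ, A n * ψ n y = (Real.sin (π * y / a) / Real.sin (π * x / a) *
        Real.exp (π^2 * s / (2 * a^2)) * (2/a) * Real.exp (-c*y)) *
        (Real.exp (-(π^2) * ((n : ℝ) + 1)^2 * s / (2 * a^2)) *
    Real.sin (π * ((n : ℝ) + 1) * x / a) * Real.sin (π * ((n : ℝ) + 1) * y / a)) := by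
      intro n
      simp only [A, ψ]
      have e2 : Real.exp (-cμ a (n+1) * s) = Real.exp (π^2 * s / (2 * a^2)) *
          Real.exp (-(π^2) * ((n : ℝ) + 1)^2 * s / (2 * a^2)) := by
        rw [← Real.exp_add]
        congr 1
        unfold cμ
        push_cast
        field_simp
        ring
      rw [e2]
      have e3 : π * y / a = π / a * y := by ring
      have e4 : π * x / a = π / a * x := by ring
      have e5 : π * ((n : ℝ) + 1) * x / a = ((n:ℝ)+1) * (π / a * x) := by ring
      have e6 : π * ((n : ℝ) + 1) * y / a = ((n+1 : ℕ):ℝ) * (π / a * y) := by push_cast; ring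
      rw [e3, e4, e5, e6]
      ring
    simp_rw [this]
    rw [tsum_mul_left]
    ring
  rw [e1, ← H]
  refine tsum_congr (fun n => ?_)
  rw [integral_const_mul, ← intervalIntegral.integral_of_le ha.le]
  simp only [A, ψ, cB]
  ring

lemma integral_mu (μ t : ℝ) : ∫ s in (0:ℝ)..t, μ * Real.exp (-μ * s) = 1 - Real.exp (-μ * t) := by
  rw [intervalIntegral.integral_eq_sub_of_hasDerivAt (f := fun s => - Real.exp (-μ * s))
    (fun s _ => by
      have h2 : HasDerivAt (fun y : ℝ => -μ*y) (-μ) s := by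
        simpa using (hasDerivAt_id s).const_mul (-μ)
      refine h2.exp.neg.congr_deriv ?_
      ring) (Continuous.intervalIntegrable (by fun_prop) _ _)]
  simp
  ring

/-- For every `c > 0` there is `C` (depending only on `c`) such that
`∫_0^t ∫_0^a p^{taboo,a}_s(x,y)·e^{−cy} dy ds ≤ C·(t/a³ + min(1,1/x))`. -/
theorem stmt10 (c : ℝ) (hc : 0 < c) :
    ∃ C : ℝ, 0 < C ∧ ∀ a : ℝ, 0 < a → ∀ x ∈ Set.Ioo (0:ℝ) a, ∀ t : ℝ, 0 ≤ t →
      (∫ s in (0:ℝ)..t, ∫ y in (0:ℝ)..a, ptaboo a s x y * Real.exp (-c * y)) ≤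
        C * (t / a^3 + min 1 (1/x)) := by
  refine ⟨4 * π^2 / c^3 + (10 / c^2 + 16 / c^3), by positivity, ?_⟩
  intro a ha x hx t ht
  obtain ⟨hx0, hxa⟩ := hx
  have hmin : 0 ≤ min 1 (1/x) := le_min zero_le_one (by positivity)
  rcases ht.eq_or_lt with rfl | ht0
  · simp only [intervalIntegral.integral_same, zero_div, zero_add]
    positivity
  have hθ0 : 0 < π / a * x := by positivity
  have hθπ : π / a * x < π := by
    rw [div_mul_eq_mul_div, div_lt_iff₀ ha]; gcongr
  have hS : 0 < Real.sin (π / a * x) := Real.sin_pos_of_pos_of_lt_pi hθ0 hθπ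
  set S := Real.sin (π / a * x) with hSdef
  let σ : ℕ → ℝ := fun n => Real.sin (((n:ℝ)+1) * (π / a * x))
  have hσ : ∀ n, |σ n| ≤ 1 := fun n => Real.abs_sin_le_one _
  have hσ0 : σ 0 = S := by simp [σ, hSdef]
  have hμ : ∀ n, 0 ≤ cμ a (n+1) := by
    intro n
    unfold cμ
    push_cast
    have : 0 ≤ ((n:ℝ)+1)^2 - 1 := by nlinarith [Nat.cast_nonneg (α := ℝ) n]
    positivity
  have hμ0 : cμ a (0+1) = 0 := by simp [cμ]
  have hβ : Summable (fun n => |cβ c a (n+1)|) :=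
    (summable_nat_add_iff 1).2 (cβ_summable c a hc ha)
  have hK0 : 0 ≤ gK c a := by
    have h1 : 0 ≤ 1 - Real.exp (-c*a) := by
      have : Real.exp (-c*a) ≤ 1 := Real.exp_le_one_iff.2 (by nlinarith)
      linarith
    have := gM_pos c a hc
    unfold gK
    positivity
  let κ : ℕ → ℝ := fun n => if n = 0 then gK c a else 0
  have hκ : ∀ n, 0 ≤ κ n := fun n => by simp only [κ]; split_ifs <;> simp [hK0]
  let F : ℕ → ℝ → ℝ := fun n s =>
    cβ c a (n+1) * (cμ a (n+1) * Real.exp (-cμ a (n+1) * s)) * σ n / S + κ n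
  have hFc : ∀ n, Continuous (F n) := fun n => by simp only [F]; fun_prop
  have hκs : ∀ z : ℝ, HasSum (fun n => κ n * z) (gK c a * z) := by
    intro z
    have := (hasSum_ite_eq (0:ℕ) (gK c a)).mul_right z
    exact this
  -- rewrite the inner integral
  have e1 : (∫ s in (0:ℝ)..t, ∫ y in (0:ℝ)..a, ptaboo a s x y * Real.exp (-c * y)) =
      ∫ s in Ioc 0 t, ∑' n, F n s := by
    rw [intervalIntegral.integral_of_le ht]
    refine setIntegral_congr_fun measurableSet_Ioc (fun s hs => ?_)
    rw [inner_eq c a hc ha x s hs.1]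
    refine tsum_congr (fun n => ?_)
    rw [coef_rel c a hc ha]
    simp only [F, κ]
    rcases Nat.eq_zero_or_pos n with rfl | hn
    · rw [hμ0]
      simp only [σ, ← hSdef]
      simp [← hSdef, hS.ne']
    · rw [if_neg (by omega), if_neg (by omega)]
      simp only [σ, ← hSdef]
      ring
  have hFint : ∀ n, Integrable (F n) (volume.restrict (Ioc 0 t)) := fun n =>
    (hFc n).integrableOn_Ioc
  have hFi : ∀ n, ∫ s in Ioc 0 t, F n s =
      cβ c a (n+1) * (1 - Real.exp (-cμ a (n+1) * t)) * σ n / S + κ n * t := by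
    intro n
    rw [← intervalIntegral.integral_of_le ht, intervalIntegral.integral_add
      (Continuous.intervalIntegrable (by fun_prop) _ _)
      (Continuous.intervalIntegrable (by fun_prop) _ _), intervalIntegral.integral_div,
      intervalIntegral.integral_mul_const, intervalIntegral.integral_const_mul, integral_mu]
    simp
    ring
  have hsum : Summable (fun n => ∫ s in Ioc 0 t, ‖F n s‖) := by
    refine Summable.of_nonneg_of_le (fun n => integral_nonneg fun y => norm_nonneg _) (fun n => ?_)
      ((hβ.mul_right (1/S)).add (hκs t).summable)
    have : ∫ s in Ioc 0 t, ‖F n s‖ ≤ ∫ s in Ioc 0 t,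
        (|cβ c a (n+1)| * (1/S) * (cμ a (n+1) * Real.exp (-cμ a (n+1) * s)) + κ n) := by
      refine integral_mono (hFint n).norm (Continuous.integrableOn_Ioc (by fun_prop)) (fun s => ?_)
      simp only [F]
      refine (norm_add_le _ _).trans ?_
      rw [Real.norm_eq_abs, Real.norm_eq_abs, abs_of_nonneg (hκ n), abs_div, abs_mul, abs_mul,
        abs_of_pos hS, abs_of_nonneg (mul_nonneg (hμ n) (Real.exp_pos _).le)]
      gcongr
      have h5 := mul_nonneg (hμ n) (Real.exp_pos (-cμ a (n+1) * s)).le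
      calc |cβ c a (n+1)| * (cμ a (n+1) * Real.exp (-cμ a (n+1) * s)) * |σ n| / S
          ≤ |cβ c a (n+1)| * (cμ a (n+1) * Real.exp (-cμ a (n+1) * s)) * 1 / S := by
            gcongr
            exact hσ n
        _ = _ := by ring
    refine this.trans ?_
    rw [← intervalIntegral.integral_of_le ht, intervalIntegral.integral_add
      (Continuous.intervalIntegrable (by fun_prop) _ _)
      (Continuous.intervalIntegrable (by fun_prop) _ _),
      intervalIntegral.integral_const_mul, integral_mu]
    have h6 : |cβ c a (n+1)| * (1/S) * (1 - Real.exp (-cμ a (n+1) * t)) ≤ |cβ c a (n+1)| * (1/S) := by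
      refine mul_le_of_le_one_right (by positivity) ?_
      linarith [Real.exp_pos (-cμ a (n+1) * t)]
    simp only [intervalIntegral.integral_const, sub_zero, smul_eq_mul]
    linarith
  have H := (hasSum_integral_of_summable_integral_norm hFint hsum).tsum_eq
  simp_rw [hFi] at H
  -- positivity
  have hpos : 0 ≤ ∑' n : ℕ, cβ c a (n+1) * Real.exp (-(((n:ℝ)+1) * π)^2 * (t/a^2) / 2) * Real.sin (((n:ℝ)+1) * (x/a * π)) := by
    refine heat_pos _ hβ (fun u hu0 hu1 => ?_) (x/a) (by positivity) (by rw [div_le_one ha]; exact hxa.le)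
      (t/a^2) (by positivity)
    rcases hu1.lt_or_eq with hlt | rfl
    · have h7 := (gf_series c a hc ha (u*a) (by positivity) (by nlinarith)).tsum_eq
      have e7 : π / a * (u * a) = u * π := by field_simp
      rw [e7] at h7
      rw [h7]
      exact gf_nonneg c a _ hc ha (by positivity) (by nlinarith)
    · have : ∀ n : ℕ, Real.sin (((n:ℝ)+1) * (1 * π)) = 0 := by
        intro n
        have := Real.sin_nat_mul_pi (n+1)
        push_cast at this
        rwa [one_mul]
      simp only [this, mul_zero, tsum_zero, le_refl]
  have hpos' : 0 ≤ ∑' n : ℕ, cβ c a (n+1) * Real.exp (-cμ a (n+1) * t) * σ n / S := by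
    have : ∀ n : ℕ, cβ c a (n+1) * Real.exp (-cμ a (n+1) * t) * σ n / S =
        (Real.exp ((π/a)^2 / 2 * t) / S) * (cβ c a (n+1) * Real.exp (-(((n:ℝ)+1) * π)^2 * (t/a^2) / 2) * Real.sin (((n:ℝ)+1) * (x/a * π))) := by
      intro n
      have e8 : Real.exp (-cμ a (n+1) * t) = Real.exp ((π/a)^2 / 2 * t) * Real.exp (-(((n:ℝ)+1) * π)^2 * (t/a^2) / 2) := by
        rw [← Real.exp_add]
        congr 1
        unfold cμ
        push_cast
        field_simp
        ring
      have e9 : x/a * π = π / a * x := by ring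
      rw [e8, e9]
      ring
    simp_rw [this]
    rw [tsum_mul_left]
    positivity
  have hs2 : Summable (fun n : ℕ => cβ c a (n+1) * Real.exp (-cμ a (n+1) * t) * σ n / S) := by
    refine Summable.of_norm_bounded (hβ.mul_right (1/S)) (fun n => ?_)
    rw [Real.norm_eq_abs, abs_div, abs_mul, abs_mul, Real.abs_exp, abs_of_pos hS, mul_one_div]
    have : Real.exp (-cμ a (n+1) * t) ≤ 1 := Real.exp_le_one_iff.2 (by nlinarith [hμ n])
    gcongr
    rw [mul_assoc]
    exact mul_le_of_le_one_right (abs_nonneg _) (mul_le_one₀ this (abs_nonneg _) (hσ n))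
  have hg := (gf_series c a hc ha x hx0.le hxa).div_const S
  have hfin : HasSum (fun n => cβ c a (n+1) * (1 - Real.exp (-cμ a (n+1) * t)) * σ n / S + κ n * t)
      (gf c a x / S - (∑' n : ℕ, cβ c a (n+1) * Real.exp (-cμ a (n+1) * t) * σ n / S) + gK c a * t) := by
    refine ((hg.sub hs2.hasSum).add (hκs t)).congr_fun ?_
    intro n
    simp only [σ]
    ring
  rw [e1, ← H, hfin.tsum_eq]
  have hb1 := gf_le c a x hc ha hx0 hxa
  rw [← hSdef, ← div_le_iff₀ hS] at hb1
  have hb2 : gK c a * t ≤ 4 * π^2 / c^3 / a^3 * t := by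
    gcongr
    exact gK_le c a hc ha
  have hb3 : 4 * π^2 / c^3 / a^3 * t = 4 * π^2 / c^3 * (t / a^3) := by ring
  have hb4 : 0 ≤ 4 * π^2 / c^3 * min 1 (1/x) := by positivity
  have hb5 : 0 ≤ (10 / c^2 + 16 / c^3) * (t / a^3) := by positivity
  linarith
end
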